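/- arXiv:1212.1682 — 6 statements merged into one kernel-verified Lean document; each statement's English description precedes it below -/
import Mathlib

section
/- There exists an integer k0 such that the following holds for every k >= k0 and every density r = 2^k * ln 2 - c with 0 < c <= 2. Let xi = k * 2^{-k/2}, and let Z'' = Z''(Phi) be the number of pairs (sigma, tau) of satisfying assignments of Phi = Phi_k(n, floor(r*n)) whose normalized Hamming distance dist(sigma,tau)/n lies in [k * 2^{-k}, 1] but outside [1/2 - xi, 1/2 + xi]. Then E[Z''] -> 0 as n -> infinity. -/
open Classical Finset Filter

noncomputable section

/-- A literal: a variable index together with a sign (`true` = positive occurrence). -/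
abbrev Lit (n : ℕ) := Fin n × Bool

/-- A clause: an ordered `k`-tuple of literals. -/
abbrev Clause (n k : ℕ) := Fin k → Lit n

/-- A `k`-CNF formula with `m` clauses over `n` variables. -/
abbrev Formula (n k m : ℕ) := Fin m → Clause n k

/-- A truth assignment. -/
abbrev Assignment (n : ℕ) := Fin n → Bool

/-- The truth value of a literal under an assignment. -/
def litVal {n : ℕ} (σ : Assignment n) (l : Lit n) : Bool :=
  if l.2 then σ l.1 else !(σ l.1)

/-- `σ` satisfies `Φ` if every clause contains at least one true literal. -/
def Satisfies {n k m : ℕ} (σ : Assignment n) (Φ : Formula n k m) : Prop :=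
  ∀ i : Fin m, ∃ j : Fin k, litVal σ (Φ i j) = true

/-- The set of satisfying assignments of `Φ`. -/
def satSet (n k m : ℕ) (Φ : Formula n k m) : Finset (Assignment n) :=
  univ.filter fun σ => Satisfies σ Φ

/-- The number of satisfying assignments of `Φ`. -/
def satCount (n k m : ℕ) (Φ : Formula n k m) : ℕ := (satSet n k m Φ).card

/-- Probability of an event under the uniformly random formula `Φ_k(n,m)`. -/
def prF (n k m : ℕ) (E : Formula n k m → Prop) : ℝ :=
  ((univ.filter fun Φ : Formula n k m => E Φ).card : ℝ) / (Fintype.card (Formula n k m) : ℝ)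

/-- Expectation of a function of the uniformly random formula `Φ_k(n,m)`. -/
def expF (n k m : ℕ) (f : Formula n k m → ℝ) : ℝ :=
  (∑ Φ : Formula n k m, f Φ) / (Fintype.card (Formula n k m) : ℝ)

/-- The number of occurrences of the literal `l` in `Φ`. -/
def occ (n k m : ℕ) (Φ : Formula n k m) (l : Lit n) : ℕ :=
  (univ.filter fun p : Fin m × Fin k => Φ p.1 p.2 = l).card

/-- The (signed) degree sequence of `Φ`. -/
def degSeq (n k m : ℕ) (Φ : Formula n k m) : Lit n → ℕ := occ n k m Φ

/-- Hamming distance between two assignments. -/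
def hdist {n : ℕ} (σ τ : Assignment n) : ℕ :=
  (univ.filter fun x => σ x ≠ τ x).card

/-- The majority-vote assignment: `x ↦ true` iff `x` occurs more often positively
than negatively. -/
def sigmaMaj (n k m : ℕ) (Φ : Formula n k m) : Assignment n :=
  fun x => decide (occ n k m Φ (x, false) < occ n k m Φ (x, true))

/-- `Z''(Φ)`: the number of pairs of satisfying assignments whose normalized Hamming
distance lies in `[k 2^{-k}, 1]` but outside `[1/2 - ξ, 1/2 + ξ]`, `ξ = k 2^{-k/2}`. -/
def Zpp (n k m : ℕ) (Φ : Formula n k m) : ℕ :=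
  (univ.filter fun p : Assignment n × Assignment n =>
    Satisfies p.1 Φ ∧ Satisfies p.2 Φ ∧
    (k : ℝ) * (2 : ℝ) ^ (-(k : ℝ)) ≤ (hdist p.1 p.2 : ℝ) / n ∧
    (hdist p.1 p.2 : ℝ) / n ≤ 1 ∧
    ¬(1 / 2 - (k : ℝ) * (2 : ℝ) ^ (-(k : ℝ) / 2) ≤ (hdist p.1 p.2 : ℝ) / n ∧
      (hdist p.1 p.2 : ℝ) / n ≤ 1 / 2 + (k : ℝ) * (2 : ℝ) ^ (-(k : ℝ) / 2))).card

lemma choose_mul_pow_le (n d : ℕ) (hd : d ≤ n) (x : ℝ) (hx : 0 < x) :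
    (n.choose d : ℝ) * x ^ d ≤ (1 + x) ^ n := by
  rw [add_comm, add_pow]
  have := Finset.single_le_sum (f := fun i => x ^ i * 1 ^ (n - i) * (n.choose i : ℝ))
    (s := Finset.range (n + 1)) (fun i _ => by positivity) (Finset.mem_range.2 (Nat.lt_succ_of_le hd))
  refine le_trans (le_of_eq ?_) this
  simp [mul_comm]

lemma choose_le_A (n d : ℕ) (hd : d ≤ n) (a : ℝ) (ha : 0 < a) (hda : (d : ℝ) = a * n) :
    (n.choose d : ℝ) ≤ Real.exp (n * (a - a * Real.log a)) := by
  have h := choose_mul_pow_le n d hd a ha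
  have h1 : (1 + a) ^ n ≤ Real.exp (n * a) := by
    rw [Real.exp_nat_mul]
    exact pow_le_pow_left₀ (by positivity) (by linarith [Real.add_one_le_exp a]) n
  have h2 : a ^ d = Real.exp (n * (a * Real.log a)) := by
    rw [show (n : ℝ) * (a * Real.log a) = d * Real.log a by rw [hda]; ring,
      Real.exp_nat_mul, Real.exp_log ha]
  rw [mul_sub, Real.exp_sub, ← h2, le_div_iff₀ (by positivity)]
  exact h.trans h1

lemma choose_le_B (n d : ℕ) (hd : d ≤ n) (a : ℝ) (hda : (d : ℝ) = a * n) :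
    (n.choose d : ℝ) ≤ Real.exp (n * (Real.log 2 - 2 * (1 / 2 - a) ^ 2)) := by
  set t : ℝ := 2 * (2 * a - 1) with ht
  have h := choose_mul_pow_le n d hd (Real.exp t) (Real.exp_pos _)
  have h0 : 1 + Real.exp t ≤ Real.exp (Real.log 2 + t / 2 + (t / 2) ^ 2 / 2) := by
    have hc := Real.cosh_le_exp_half_sq (t / 2)
    rw [Real.cosh_eq] at hc
    rw [Real.exp_add, Real.exp_add, Real.exp_log two_pos]
    have e1 : Real.exp t = Real.exp (t / 2) * Real.exp (t / 2) := by
      rw [← Real.exp_add]; congr 1; ring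
    have e2 : Real.exp (t / 2) * Real.exp (-(t / 2)) = 1 := by
      rw [← Real.exp_add]; simp
    have := mul_le_mul_of_nonneg_left hc (show 0 ≤ 2 * Real.exp (t / 2) by positivity)
    rw [e1]
    nlinarith
  have h1 : (1 + Real.exp t) ^ n ≤ Real.exp (n * (Real.log 2 + t / 2 + (t / 2) ^ 2 / 2)) := by
    rw [Real.exp_nat_mul]
    exact pow_le_pow_left₀ (by positivity) h0 n
  have h2 : Real.exp t ^ d = Real.exp (n * (a * t)) := by
    rw [← Real.exp_nat_mul, hda]; congr 1; ring
  have h3 : (n : ℝ) * (Real.log 2 - 2 * (1 / 2 - a) ^ 2) =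
      n * (Real.log 2 + t / 2 + (t / 2) ^ 2 / 2) - n * (a * t) := by
    rw [ht]; ring
  rw [h3, Real.exp_sub, ← h2, le_div_iff₀ (by positivity)]
  exact h.trans h1

lemma large_k : ∃ k0 : ℕ, ∀ k : ℕ, k0 ≤ k → 21 ≤ k ∧
    1 + 2 * Real.log k - Real.log 2 / 2 * k + 5 / k ≤ 0 ∧
    6 * (7 / 8 : ℝ) ^ k ≤ 1 / (2 * (k : ℝ) ^ 2) := by
  have h1 : ∀ᶠ k : ℕ in atTop, 21 ≤ k := eventually_ge_atTop 21
  have h2 : ∀ᶠ k : ℕ in atTop, Real.log k ≤ (1 / 10) * k := by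
    have := (Real.isLittleO_log_id_atTop.comp_tendsto tendsto_natCast_atTop_atTop).bound
      (show (0 : ℝ) < 1 / 10 by norm_num)
    filter_upwards [this, eventually_ge_atTop 1] with k hk hk1
    simp only [Function.comp, id, Real.norm_eq_abs, Nat.abs_cast] at hk
    exact (le_abs_self _).trans hk
  have h3 : ∀ᶠ k : ℕ in atTop, (k : ℝ) ^ 2 * (7 / 8 : ℝ) ^ k < 1 / 12 := by
    have := tendsto_pow_const_mul_const_pow_of_lt_one 2 (show (0 : ℝ) ≤ 7 / 8 by norm_num)
      (by norm_num)
    exact this.eventually_lt_const (by norm_num)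
  obtain ⟨k0, hk0⟩ := eventually_atTop.1 (h1.and (h2.and h3))
  refine ⟨k0, fun k hk => ?_⟩
  obtain ⟨a, b, c⟩ := hk0 k hk
  have ak : (21 : ℝ) ≤ k := by exact_mod_cast a
  refine ⟨a, ?_, ?_⟩
  · have : 5 / (k : ℝ) ≤ 5 / 21 := by gcongr
    have := Real.log_two_gt_d9
    nlinarith
  · rw [le_div_iff₀ (by positivity)]
    linarith

set_option maxHeartbeats 1000000 in
/-- Analytic core: one of the two entropy bounds beats the probability term. -/
lemma core (k : ℕ) (hk : 21 ≤ k)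
    (h2 : 1 + 2 * Real.log k - Real.log 2 / 2 * k + 5 / k ≤ 0)
    (h3 : 6 * (7 / 8 : ℝ) ^ k ≤ 1 / (2 * (k : ℝ) ^ 2))
    (a s : ℝ) (hs : 0 < s) (hs2 : s ^ 2 = ((2 : ℝ) ^ k)⁻¹)
    (ha : (k : ℝ) * ((2 : ℝ) ^ k)⁻¹ ≤ a) (ha1 : a ≤ 1)
    (hout : ¬ (1 / 2 - (k : ℝ) * s ≤ a ∧ a ≤ 1 / 2 + k * s)) :
    (a - a * Real.log a - Real.log 2 * (1 - (1 - a) ^ k) + 5 * ((2 : ℝ) ^ k)⁻¹ ≤ 0) ∨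
    (-2 * (1 / 2 - a) ^ 2 + Real.log 2 * (1 - a) ^ k + 5 * ((2 : ℝ) ^ k)⁻¹ ≤ 0) := by
  have hkR : (21 : ℝ) ≤ k := by exact_mod_cast hk
  have hk0 : (0 : ℝ) < k := by linarith
  set Q : ℝ := ((2 : ℝ) ^ k)⁻¹ with hQ
  have hQ0 : 0 < Q := by positivity
  have hQs : Q ≤ 1 / 2097152 := by
    rw [hQ, one_div]
    apply inv_anti₀ (by norm_num)
    calc (2097152 : ℝ) = 2 ^ 21 := by norm_num
      _ ≤ 2 ^ k := pow_le_pow_right₀ (by norm_num) hk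
  have hQh : Q = (1 / 2 : ℝ) ^ k := by rw [hQ]; simp
  have ha0 : 0 < a := lt_of_lt_of_le (by positivity) ha
  have hl1 := Real.log_two_gt_d9
  have hl2 := Real.log_two_lt_d9
  have hy0 : 0 ≤ (1 - a) ^ k := pow_nonneg (by linarith) k
  have hyexp : (1 - a) ^ k ≤ Real.exp (-(k * a)) := by
    rw [show -(k * a) = k * (-a) by ring, Real.exp_nat_mul]
    exact pow_le_pow_left₀ (by linarith) (by linarith [Real.add_one_le_exp (-a)]) k
  have hyb : (1 - a) ^ k * (1 + k * a) ≤ 1 := by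
    have e1 : 0 < Real.exp (k * a) := Real.exp_pos _
    have e2 : Real.exp (-(k * a)) * Real.exp (k * a) = 1 := by rw [← Real.exp_add]; simp
    have e3 := Real.add_one_le_exp (k * a)
    have e4 : 0 ≤ k * a := by positivity
    calc (1 - a) ^ k * (1 + k * a) ≤ Real.exp (-(k * a)) * Real.exp (k * a) := by
          gcongr; linarith
      _ = 1 := e2
  have hQa : Q ≤ a / k := by rw [le_div_iff₀ hk0]; linarith
  by_cases c1 : a ≤ 1 / (k : ℝ) ^ 2
  · left
    have hu2 : k ^ 2 * a ≤ 1 := by rw [le_div_iff₀ (by positivity)] at c1; linarith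
    have hlogk : 3 ≤ Real.log k := by
      rw [Real.le_log_iff_exp_le hk0]
      have : Real.exp 3 = Real.exp 1 ^ 3 := by rw [← Real.exp_nat_mul]; norm_num
      rw [this]
      have h := Real.exp_one_lt_d9
      calc Real.exp 1 ^ 3 ≤ 2.7182818286 ^ 3 := by gcongr
        _ ≤ 21 := by norm_num
        _ ≤ k := hkR
    have hloga : Real.log k - k * Real.log 2 ≤ Real.log a := by
      have := Real.log_le_log (by positivity) ha
      rw [Real.log_mul (by positivity) (by positivity), hQ, Real.log_inv, Real.log_pow] at this
      linarith
    have hy : k * a - (k * a) ^ 2 ≤ 1 - (1 - a) ^ k := by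
      have e4 : 0 ≤ k * a := by positivity
      have : (1 - a) ^ k ≤ 1 / (1 + k * a) := by rw [le_div_iff₀ (by positivity)]; exact hyb
      have : 1 / (1 + k * a) ≤ 1 - k * a + (k * a) ^ 2 := by
        rw [div_le_iff₀ (by positivity)]
        nlinarith [pow_nonneg e4 3]
      linarith
    have f1 := mul_le_mul_of_nonneg_left hy (show 0 ≤ Real.log 2 by linarith)
    have f2 := mul_le_mul_of_nonneg_left hloga ha0.le
    have f3 : Real.log 2 * (k * a) ^ 2 ≤ a := by
      have : Real.log 2 * (k * a) ^ 2 = Real.log 2 * a * (k ^ 2 * a) := by ring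
      rw [this]
      calc Real.log 2 * a * (k ^ 2 * a) ≤ 1 * a * 1 := by gcongr; linarith
        _ = a := by ring
    have f4 : 5 * Q ≤ a * (5 / 21) := by
      have : a / k ≤ a / 21 := by gcongr
      linarith
    have f5 := mul_le_mul_of_nonneg_left hlogk ha0.le
    nlinarith
  push Not at c1
  by_cases c2 : a ≤ 1 / k
  · left
    have hu : k * a ≤ 1 := by rw [le_div_iff₀ hk0] at c2; linarith
    have e4 : 0 ≤ k * a := by positivity
    have hy : k * a / 2 ≤ 1 - (1 - a) ^ k := by nlinarith
    have hloga : - (2 * Real.log k) ≤ Real.log a := by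
      have := Real.log_le_log (by positivity) c1.le
      rw [one_div, Real.log_inv, Real.log_pow] at this
      push_cast at this
      linarith
    have f1 := mul_le_mul_of_nonneg_left hy (show 0 ≤ Real.log 2 by linarith)
    have f2 := mul_le_mul_of_nonneg_left hloga ha0.le
    have f3 := mul_le_mul_of_nonneg_left h2 ha0.le
    have f4 : a * (5 / k) = 5 * (a / k) := by ring
    nlinarith
  push Not at c2
  right
  have hka : 1 ≤ k * a := by
    rw [div_lt_iff₀ hk0] at c2; linarith
  by_cases c3 : a ≤ 1 / 8
  · have hy : (1 - a) ^ k ≤ 0.37 := by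
      refine hyexp.trans ?_
      have : Real.exp (-(k * a)) ≤ Real.exp (-1) := Real.exp_le_exp.2 (by linarith)
      linarith [Real.exp_neg_one_lt_d9]
    nlinarith
  push Not at c3
  by_cases c4 : a ≤ 1 / 2 - 1 / (2 * k)
  · have hy : (1 - a) ^ k ≤ (7 / 8) ^ k := pow_le_pow_left₀ (by linarith) (by linarith) k
    have hq : Q ≤ (7 / 8) ^ k := by
      rw [hQh]; exact pow_le_pow_left₀ (by norm_num) (by norm_num) k
    have hd : 1 / (2 * (k : ℝ)) ≤ 1 / 2 - a := by linarith
    have hd2 : (1 / (2 * (k : ℝ))) ^ 2 ≤ (1 / 2 - a) ^ 2 := by gcongr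
    have : 2 * (1 / (2 * (k : ℝ))) ^ 2 = 1 / (2 * (k : ℝ) ^ 2) := by field_simp
    have : Real.log 2 * (1 - a) ^ k ≤ 1 * (1 - a) ^ k := by gcongr; linarith
    linarith
  push Not at c4
  have hdist : (k * s) ^ 2 ≤ (1 / 2 - a) ^ 2 := by
    have hks : 0 ≤ k * s := by positivity
    by_cases c5 : 1 / 2 - (k : ℝ) * s ≤ a
    · have : 1 / 2 + k * s < a := by
        by_contra hh; exact hout ⟨c5, by linarith⟩
      rw [show (1 / 2 - a) ^ 2 = (a - 1 / 2) ^ 2 by ring]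
      exact pow_le_pow_left₀ hks (by linarith) 2
    · push Not at c5
      exact pow_le_pow_left₀ hks (by linarith) 2
  rw [mul_pow, hs2] at hdist
  have hyQ : (1 - a) ^ k ≤ 3 * Q := by
    have hz : 1 - a ≤ (1 / 2) * Real.exp (1 / k) := by
      have := Real.add_one_le_exp (1 / (k : ℝ))
      have e : 1 / (2 * (k : ℝ)) = (1 / 2) * (1 / k) := by field_simp
      rw [e] at c4
      linarith
    calc (1 - a) ^ k ≤ ((1 / 2) * Real.exp (1 / k)) ^ k := pow_le_pow_left₀ (by linarith) hz k
      _ = Q * Real.exp 1 := by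
        rw [mul_pow, ← hQh, ← Real.exp_nat_mul]; congr 2; field_simp
      _ ≤ 3 * Q := by nlinarith [Real.exp_one_lt_d9]
  have : Real.log 2 * (1 - a) ^ k ≤ 1 * (1 - a) ^ k := by gcongr; linarith
  have : (441 : ℝ) * Q ≤ k ^ 2 * Q := by gcongr; nlinarith
  linarith

/-- The probability that a uniform clause is satisfied by both of two assignments. -/
def pk (k : ℕ) (a : ℝ) : ℝ := 1 - ((2 : ℝ) ^ k)⁻¹ * (2 - (1 - a) ^ k)

lemma term_bound (k n d : ℕ) (hk : 21 ≤ k)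
    (h2 : 1 + 2 * Real.log k - Real.log 2 / 2 * k + 5 / k ≤ 0)
    (h3 : 6 * (7 / 8 : ℝ) ^ k ≤ 1 / (2 * (k : ℝ) ^ 2))
    (c : ℝ) (hc0 : 0 < c) (hc2 : c ≤ 2) (hn : 0 < n) (hd : d ≤ n)
    (ha : (k : ℝ) * (2 : ℝ) ^ (-(k : ℝ)) ≤ (d : ℝ) / n)
    (hout : ¬(1 / 2 - (k : ℝ) * (2 : ℝ) ^ (-(k : ℝ) / 2) ≤ (d : ℝ) / n ∧
      (d : ℝ) / n ≤ 1 / 2 + (k : ℝ) * (2 : ℝ) ^ (-(k : ℝ) / 2))) :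
    (2 : ℝ) ^ n * ((n.choose d : ℝ) *
      pk k ((d : ℝ) / n) ^ ⌊(2 ^ k * Real.log 2 - c) * (n : ℝ)⌋₊) ≤
      Real.exp 1 * Real.exp (-((2 : ℝ) ^ k)⁻¹) ^ n := by
  have hnR : (0 : ℝ) < n := by exact_mod_cast hn
  have hkR : (21 : ℝ) ≤ k := by exact_mod_cast hk
  set a : ℝ := (d : ℝ) / n with haDef
  have hda : (d : ℝ) = a * n := by rw [haDef]; field_simp
  have ha1 : a ≤ 1 := by
    rw [haDef, div_le_one hnR]; exact_mod_cast hd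
  have hs2 : ((2 : ℝ) ^ (-(k : ℝ) / 2)) ^ 2 = ((2 : ℝ) ^ k)⁻¹ := by
    rw [← Real.rpow_natCast, ← Real.rpow_mul (by norm_num), ← Real.rpow_natCast 2 k,
      ← Real.rpow_neg (by norm_num)]
    congr 1; push_cast; ring
  rw [Real.rpow_neg (by norm_num), Real.rpow_natCast] at ha
  have hcore := core k hk h2 h3 a _ (by positivity) hs2 ha ha1 hout
  set Q : ℝ := ((2 : ℝ) ^ k)⁻¹ with hQ
  have hQ0 : 0 < Q := by positivity
  have hQ2 : Q * 2 ^ k = 1 := by rw [hQ]; field_simp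
  have hQs : Q ≤ 1 / 2 := by
    rw [hQ, one_div]
    apply inv_anti₀ (by norm_num)
    calc (2 : ℝ) = 2 ^ 1 := by norm_num
      _ ≤ 2 ^ k := pow_le_pow_right₀ (by norm_num) (by omega)
  have ha0 : 0 < a := lt_of_lt_of_le (by positivity) ha
  set y : ℝ := (1 - a) ^ k with hy
  have hy0 : 0 ≤ y := pow_nonneg (by linarith) k
  have hy1 : y ≤ 1 := pow_le_one₀ (by linarith) (by linarith)
  obtain ⟨h, hch, hh⟩ : ∃ h : ℝ, (n.choose d : ℝ) ≤ Real.exp (n * h) ∧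
      h - Real.log 2 * (1 - y) + 5 * Q ≤ 0 := by
    rcases hcore with hA | hB
    · exact ⟨_, choose_le_A n d hd a ha0 hda, hA⟩
    · exact ⟨_, choose_le_B n d hd a hda, by linarith⟩
  set x : ℝ := Q * (2 - y) with hx
  have hx0 : 0 ≤ x := mul_nonneg hQ0.le (by linarith)
  have hx1 : x ≤ 1 := by nlinarith
  set m := ⌊(2 ^ k * Real.log 2 - c) * (n : ℝ)⌋₊ with hm
  have hmge : (2 ^ k * Real.log 2 - c) * (n : ℝ) - 1 ≤ m := by
    have := Nat.lt_floor_add_one ((2 ^ k * Real.log 2 - c) * (n : ℝ))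
    linarith
  have hp : pk k a ^ m ≤ Real.exp (m * (-x)) := by
    rw [Real.exp_nat_mul]
    refine pow_le_pow_left₀ ?_ ?_ m
    · show 0 ≤ 1 - Q * (2 - y)
      linarith
    · show 1 - Q * (2 - y) ≤ _
      linarith [Real.add_one_le_exp (-x)]
  have hxr : x * (2 ^ k * Real.log 2 - c) = (2 - y) * (Real.log 2 - c * Q) := by
    rw [hx]; linear_combination (2 - y) * Real.log 2 * hQ2
  have e2 : (2 : ℝ) ^ n = Real.exp (n * Real.log 2) := by
    rw [Real.exp_nat_mul, Real.exp_log two_pos]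
  calc (2 : ℝ) ^ n * ((n.choose d : ℝ) * pk k a ^ m)
      ≤ Real.exp (n * Real.log 2) * (Real.exp (n * h) * Real.exp (m * (-x))) := by
        rw [e2]
        have hp0 : 0 ≤ pk k a ^ m := by
          apply pow_nonneg
          show 0 ≤ 1 - Q * (2 - y)
          linarith
        gcongr
    _ = Real.exp (n * Real.log 2 + (n * h + m * (-x))) := by
        rw [Real.exp_add, Real.exp_add]
    _ ≤ Real.exp (1 + n * (-Q)) := by
        apply Real.exp_le_exp.2
        have f1 := mul_le_mul_of_nonneg_left hmge hx0
        have f2 : x * ((2 ^ k * Real.log 2 - c) * (n : ℝ) - 1) =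
          (2 - y) * (Real.log 2 - c * Q) * n - x := by rw [← hxr]; ring
        have f3 : (2 - y) * (c * Q) ≤ 2 * (2 * Q) := by gcongr; linarith
        have f4 : Real.log 2 + h - (2 - y) * (Real.log 2 - c * Q) ≤ - Q := by linarith
        have f5 := mul_le_mul_of_nonneg_left f4 hnR.le
        linarith
    _ = _ := by rw [Real.exp_add, Real.exp_nat_mul]

lemma card_falseLit {n : ℕ} (σ : Assignment n) :
    (univ.filter fun l : Lit n => litVal σ l = false).card = n := by
  have : (univ.filter fun l : Lit n => litVal σ l = false) =
      univ.image (fun x : Fin n => (x, !(σ x))) := by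
    ext ⟨x, b⟩
    simp only [mem_filter, mem_univ, true_and, mem_image, litVal, Prod.mk.injEq]
    constructor
    · intro h; refine ⟨x, rfl, ?_⟩; cases b <;> cases hs : σ x <;> simp_all
    · rintro ⟨x', rfl, rfl⟩; cases hs : σ x' <;> simp [hs]
  rw [this, card_image_of_injective _ (fun x y h => (Prod.mk.inj h).1)]
  simp

lemma card_falseLit2 {n : ℕ} (σ τ : Assignment n) :
    (univ.filter fun l : Lit n => litVal σ l = false ∧ litVal τ l = false).card
      = n - hdist σ τ := by
  have : (univ.filter fun l : Lit n => litVal σ l = false ∧ litVal τ l = false) =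
      (univ.filter fun x => ¬ (σ x ≠ τ x)).image (fun x : Fin n => (x, !(σ x))) := by
    ext ⟨x, b⟩
    simp only [mem_filter, mem_univ, true_and, mem_image, litVal, Prod.mk.injEq]
    constructor
    · intro h; refine ⟨x, ?_, rfl, ?_⟩ <;> cases b <;> cases hs : σ x <;> simp_all
    · rintro ⟨x', h, rfl, rfl⟩; cases hs : σ x' <;> cases ht : τ x' <;> simp_all
  rw [this, card_image_of_injective _ (fun x y h => (Prod.mk.inj h).1)]
  have h := Finset.card_filter_add_card_filter_not (s := (univ : Finset (Fin n)))
    (fun x => σ x ≠ τ x)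
  simp only [card_univ, Fintype.card_fin] at h
  unfold hdist
  omega

lemma card_pow {n k : ℕ} (P : Lit n → Prop) [DecidablePred P]
    [DecidablePred fun C : Clause n k => ∀ j, P (C j)] :
    (univ.filter fun C : Clause n k => ∀ j, P (C j)).card = (univ.filter P).card ^ k := by
  have : (univ.filter fun C : Clause n k => ∀ j, P (C j)) =
      Fintype.piFinset (fun _ : Fin k => univ.filter P) := by
    ext C; simp [Fintype.mem_piFinset]
  rw [this, Fintype.card_piFinset]; simp

lemma hdist_le {n : ℕ} (σ τ : Assignment n) : hdist σ τ ≤ n := by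
  unfold hdist
  exact (card_filter_le _ _).trans (by simp)

/-- Both assignments satisfy the clause. -/
def Good {n k : ℕ} (σ τ : Assignment n) (C : Clause n k) : Prop :=
  (∃ j, litVal σ (C j) = true) ∧ (∃ j, litVal τ (C j) = true)

lemma card_good {n k : ℕ} (hn : 0 < n) (σ τ : Assignment n) :
    ((univ.filter fun C : Clause n k => Good σ τ C).card : ℝ)
      = (2 * n : ℝ) ^ k * pk k ((hdist σ τ : ℝ) / n) := by
  set A := univ.filter fun C : Clause n k => ∀ j, litVal σ (C j) = false with hA
  set B := univ.filter fun C : Clause n k => ∀ j, litVal τ (C j) = false with hB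
  have cA : A.card = n ^ k := by rw [hA, card_pow (fun l => litVal σ l = false), card_falseLit]
  have cB : B.card = n ^ k := by rw [hB, card_pow (fun l => litVal τ l = false), card_falseLit]
  have cAB : (A ∩ B).card = (n - hdist σ τ) ^ k := by
    rw [← card_falseLit2, ← card_pow (fun l => litVal σ l = false ∧ litVal τ l = false)]
    congr 1
    ext C
    simp [hA, hB, forall_and]
  have hG : (univ.filter fun C : Clause n k => Good σ τ C) = (A ∪ B)ᶜ := by
    ext C
    rw [mem_filter]
    simp [hA, hB, Good]
  have h1 := card_union_add_card_inter A B
  have h2 := card_add_card_compl (A ∪ B)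
  rw [← hG] at h2
  have h3 : Fintype.card (Clause n k) = (2 * n) ^ k := by
    simp [Fintype.card_pi, mul_comm]
  rw [h3] at h2
  rw [cA, cB, cAB] at h1
  have h1' : (((A ∪ B).card : ℕ) : ℝ) + ((n : ℝ) - hdist σ τ) ^ k = n ^ k + n ^ k := by
    rw [← Nat.cast_sub (hdist_le σ τ)]; exact_mod_cast h1
  have h2' : (((A ∪ B).card : ℕ) : ℝ) +
      ((univ.filter fun C : Clause n k => Good σ τ C).card : ℝ) = (2 * n) ^ k := by
    exact_mod_cast h2
  have hnR : (0 : ℝ) < n := by exact_mod_cast hn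
  have h4 : (1 - (hdist σ τ : ℝ) / n) ^ k = ((n : ℝ) - hdist σ τ) ^ k / n ^ k := by
    rw [← div_pow]; congr 1; field_simp
  unfold pk
  rw [h4, mul_pow]
  rw [mul_pow] at h2'
  field_simp
  linarith

lemma card_both {n k m : ℕ} (σ τ : Assignment n) :
    (univ.filter fun Φ : Formula n k m => Satisfies σ Φ ∧ Satisfies τ Φ).card
      = (univ.filter fun C : Clause n k => Good σ τ C).card ^ m := by
  have : (univ.filter fun Φ : Formula n k m => Satisfies σ Φ ∧ Satisfies τ Φ) =
      Fintype.piFinset (fun _ : Fin m => univ.filter fun C : Clause n k => Good σ τ C) := by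
    ext C
    simp only [Fintype.mem_piFinset, mem_filter, mem_univ, true_and]
    simp only [Satisfies, Good, forall_and]
  rw [this, Fintype.card_piFinset]; simp

lemma sum_hdist {n : ℕ} (σ : Assignment n) (g : ℕ → ℝ) :
    ∑ τ : Assignment n, g (hdist σ τ) = ∑ d ∈ range (n + 1), (n.choose d : ℝ) * g d := by
  have h := Finset.sum_powerset_apply_card (x := (univ : Finset (Fin n))) (fun d => g d)
  simp only [card_univ, Fintype.card_fin, nsmul_eq_mul, powerset_univ] at h
  rw [← h]
  refine Fintype.sum_bijective (fun τ => univ.filter fun x => σ x ≠ τ x) ⟨?_, ?_⟩ _ _ ?_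
  · intro τ τ' he
    funext x
    have := congrArg (fun S => x ∈ S) he
    simp only [mem_filter, mem_univ, true_and, eq_iff_iff] at this
    cases h1 : σ x <;> cases h2 : τ x <;> cases h3 : τ' x <;> simp_all
  · intro S
    refine ⟨fun x => if x ∈ S then !(σ x) else σ x, ?_⟩
    ext x
    by_cases hx : x ∈ S <;> simp [hx]
  · intro τ; rfl

/-- The distance condition. -/
def Far (n k d : ℕ) : Prop :=
    (k : ℝ) * (2 : ℝ) ^ (-(k : ℝ)) ≤ (d : ℝ) / n ∧
    (d : ℝ) / n ≤ 1 ∧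
    ¬(1 / 2 - (k : ℝ) * (2 : ℝ) ^ (-(k : ℝ) / 2) ≤ (d : ℝ) / n ∧
      (d : ℝ) / n ≤ 1 / 2 + (k : ℝ) * (2 : ℝ) ^ (-(k : ℝ) / 2))

lemma expF_eq {n k m : ℕ} (hn : 0 < n) :
    expF n k m (fun Φ => (Zpp n k m Φ : ℝ)) =
      ∑ d ∈ range (n + 1), (2 : ℝ) ^ n *
        ((n.choose d : ℝ) * if Far n k d then pk k ((d : ℝ) / n) ^ m else 0) := by
  have hnR : (0 : ℝ) < n := by exact_mod_cast hn
  have hcard : (Fintype.card (Formula n k m) : ℝ) = ((2 * n : ℝ) ^ k) ^ m := by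
    simp [Fintype.card_pi, mul_comm]
  have hZ : ∀ Φ : Formula n k m, (Zpp n k m Φ : ℝ) =
      ∑ σ : Assignment n, ∑ τ : Assignment n,
        if Far n k (hdist σ τ) then (if Satisfies σ Φ ∧ Satisfies τ Φ then (1 : ℝ) else 0)
        else 0 := by
    intro Φ
    rw [← Fintype.sum_prod_type' (f := fun σ τ => if Far n k (hdist σ τ) then
      (if Satisfies σ Φ ∧ Satisfies τ Φ then (1 : ℝ) else 0) else 0)]
    unfold Zpp
    rw [card_filter]
    push_cast
    refine sum_congr rfl fun p _ => ?_
    rw [← ite_and]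
    refine if_congr ?_ rfl rfl
    unfold Far
    tauto
  have hmain : ∀ σ τ : Assignment n,
      (∑ Φ : Formula n k m, if Far n k (hdist σ τ) then
        (if Satisfies σ Φ ∧ Satisfies τ Φ then (1 : ℝ) else 0) else 0) =
      ((2 * n : ℝ) ^ k) ^ m *
        (if Far n k (hdist σ τ) then pk k ((hdist σ τ : ℝ) / n) ^ m else 0) := by
    intro σ τ
    by_cases hF : Far n k (hdist σ τ)
    · simp only [hF, if_true]
      rw [← mul_pow, ← card_good hn, sum_boole, card_both]
      push_cast; rfl
    · simp [hF]
  unfold expF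
  rw [sum_congr rfl (fun Φ _ => hZ Φ), sum_comm]
  rw [sum_congr rfl (fun σ _ => sum_comm)]
  simp only [hmain]
  simp only [← mul_sum]
  rw [hcard, mul_div_cancel_left₀ _ (by positivity)]
  rw [sum_congr rfl (fun σ _ => sum_hdist σ
    (fun d => if Far n k d then pk k ((d : ℝ) / n) ^ m else 0))]
  rw [sum_const]
  simp

/-- For `k ≥ k0` and `r = 2^k ln 2 - c` with `0 < c ≤ 2`,
`E[Z''] → 0` as `n → ∞`. -/
theorem statement7 :
    ∃ k0 : ℕ, ∀ k : ℕ, k0 ≤ k → ∀ c : ℝ, 0 < c → c ≤ 2 →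
      Tendsto
        (fun n : ℕ =>
          let m := ⌊(2 ^ k * Real.log 2 - c) * (n : ℝ)⌋₊
          expF n k m fun Φ => (Zpp n k m Φ : ℝ))
        atTop (nhds 0) := by
  obtain ⟨k0, hk0⟩ := large_k
  refine ⟨k0, fun k hk c hc0 hc2 => ?_⟩
  obtain ⟨h1, h2, h3⟩ := hk0 k hk
  set q : ℝ := Real.exp (-((2 : ℝ) ^ k)⁻¹) with hq
  have hq0 : 0 < q := Real.exp_pos _
  have hq1 : q < 1 := by
    rw [hq, Real.exp_lt_one_iff]
    have : (0 : ℝ) < ((2 : ℝ) ^ k)⁻¹ := by positivity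
    linarith
  have hlim : Tendsto (fun n : ℕ => Real.exp 1 * ((n : ℝ) * q ^ n + q ^ n)) atTop (nhds 0) := by
    have t1 := tendsto_self_mul_const_pow_of_lt_one hq0.le hq1
    have t2 := tendsto_pow_atTop_nhds_zero_of_lt_one hq0.le hq1
    simpa using (t1.add t2).const_mul (Real.exp 1)
  refine squeeze_zero' ?_ ?_ hlim
  · refine Eventually.of_forall fun n => ?_
    exact div_nonneg (sum_nonneg fun _ _ => Nat.cast_nonneg _) (Nat.cast_nonneg _)
  · filter_upwards [eventually_gt_atTop 0] with n hn
    show expF n k _ _ ≤ _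
    rw [expF_eq hn]
    have : ∀ d ∈ range (n + 1), (2 : ℝ) ^ n * ((n.choose d : ℝ) * if Far n k d then
        pk k ((d : ℝ) / n) ^ ⌊(2 ^ k * Real.log 2 - c) * (n : ℝ)⌋₊ else 0)
        ≤ Real.exp 1 * q ^ n := by
      intro d hd
      have hd' : d ≤ n := Nat.lt_succ_iff.1 (mem_range.1 hd)
      by_cases hF : Far n k d
      · rw [if_pos hF]
        exact term_bound k n d h1 h2 h3 c hc0 hc2 hn hd' hF.1 hF.2.2
      · rw [if_neg hF, mul_zero, mul_zero]; positivity
    refine (sum_le_sum this).trans (le_of_eq ?_)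
    simp
    ring
end
end

section
/- There exists an integer k0 such that for all k >= k0, all c with 0 < c <= 2, r = 2^k * ln 2 - c, and all x with k * 2^{-k} <= x <= 1 and |x - 1/2| >= k * 2^{-k/2}, one has ln 2 + h(x) + r * ln(1 - 2^{1-k} + 2^{-k} * (1-x)^k) < 0, where h(x) = -x * ln x - (1-x) * ln(1-x) is the binary entropy function (extended continuously by h(0) = h(1) = 0). -/
/-- Pointwise entropy bound, second order around `1/2`. -/
lemma ent_one (x : ℝ) (h0 : 0 ≤ x) (h1 : x ≤ 1) :
    -x * Real.log x ≤ x * Real.log 2 - (2 * x - 1) / 2 - (2 * x - 1) ^ 2 / 16 := by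
  rcases h0.eq_or_lt with rfl | hx
  · norm_num
  set s := Real.sqrt (2 * x) with hs
  have hs0 : 0 < s := Real.sqrt_pos.2 (by linarith)
  have hss : s ^ 2 = 2 * x := Real.sq_sqrt (by linarith)
  have h2 : Real.log (s⁻¹) ≤ s⁻¹ - 1 := Real.log_le_sub_one_of_pos (by positivity)
  have h3 : Real.log 2 + Real.log x = 2 * Real.log s := by
    rw [← Real.log_mul (by norm_num) hx.ne', ← hss, Real.log_pow]; norm_num
  rw [Real.log_inv] at h2
  have h4 : s ^ 2 * (-Real.log s) ≤ s ^ 2 * (s⁻¹ - 1) :=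
    mul_le_mul_of_nonneg_left h2 (by positivity)
  have h5 : s ^ 2 * (s⁻¹ - 1) = s - s ^ 2 := by field_simp
  have h6 : s ≤ 1 + (2 * x - 1) / 2 - (2 * x - 1) ^ 2 / 16 := by
    apply Real.sqrt_le_iff.2
    constructor
    · nlinarith
    · have : 0 ≤ (2 * x - 1) ^ 2 * (1 / 8 - (2 * x - 1) / 16 + (2 * x - 1) ^ 2 / 256) := by
        apply mul_nonneg (sq_nonneg _)
        nlinarith [sq_nonneg (2 * x - 1)]
      nlinarith
  have h7 : Real.log x = 2 * Real.log s - Real.log 2 := by linarith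
  rw [h7]
  rw [h5, hss] at h4
  nlinarith

lemma ent_two (x : ℝ) (h0 : 0 ≤ x) (h1 : x ≤ 1) :
    -x * Real.log x - (1 - x) * Real.log (1 - x) ≤ Real.log 2 - (x - 1 / 2) ^ 2 / 2 := by
  have a := ent_one x h0 h1
  have b := ent_one (1 - x) (by linarith) (by linarith)
  nlinarith

lemma ent_small (x : ℝ) (h0 : 0 ≤ x) (h1 : x ≤ 1) :
    - (1 - x) * Real.log (1 - x) ≤ x := by
  rcases h1.eq_or_lt with rfl | hx
  · norm_num
  have h2 := Real.log_le_sub_one_of_pos (x := (1 - x)⁻¹) (inv_pos.2 (by linarith))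
  rw [Real.log_inv] at h2
  have h3 := mul_le_mul_of_nonneg_left h2 (by linarith : 0 ≤ 1 - x)
  have h4 : (1 - x) * ((1 - x)⁻¹ - 1) = x := by
    have : 1 - x ≠ 0 := by linarith
    field_simp; ring
  linarith

lemma pow_bound (x : ℝ) (k : ℕ) (h0 : 0 ≤ x) (h1 : x ≤ 1) :
    (1 - x) ^ k ≤ Real.exp (-(k * x)) := by
  have h : 1 - x ≤ Real.exp (-x) := by linarith [Real.add_one_le_exp (-x)]
  calc (1 - x) ^ k ≤ Real.exp (-x) ^ k := pow_le_pow_left₀ (by linarith) h k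
    _ = _ := by rw [← Real.exp_nat_mul]; ring_nf

lemma exp_bound (y : ℝ) (h0 : 0 ≤ y) : Real.exp (-y) ≤ 1 / (1 + y) := by
  rw [Real.exp_neg, ← one_div]
  apply one_div_le_one_div_of_le (by linarith)
  linarith [Real.add_one_le_exp y]

set_option maxHeartbeats 1000000 in
lemma core_s8 (k : ℕ) (q w x : ℝ) (hk : 10 ≤ k) (hq : q = (1 / 2) ^ k) (hw : 0 ≤ w)
    (hwq : w ^ 2 = q)
    (e1 : 2 + 4 / (k : ℝ) < Real.log k)
    (e2 : 2 * Real.log k + 1 + 4 / (k : ℝ) < Real.log 2 * k / 2)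
    (e3 : q < 1 / 1000)
    (e4 : (k : ℝ) ^ 2 * (9 / 10) ^ k + 4 * ((k : ℝ) ^ 2 * (1 / 2) ^ k) < 1 / 2)
    (hx : k * q ≤ x) (hx1 : x ≤ 1) (hxt : k * w ≤ |x - 1 / 2|) :
    (-x * Real.log x - (1 - x) * Real.log (1 - x)) - Real.log 2 + Real.log 2 * (1 - x) ^ k
      + 4 * q < 0 := by
  have hkR : (10 : ℝ) ≤ k := by exact_mod_cast hk
  have hk0 : (0 : ℝ) < k := by linarith
  have hq0 : 0 < q := by rw [hq]; positivity
  have hx0 : 0 < x := lt_of_lt_of_le (by positivity) hx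
  have hL0 := Real.log_two_gt_d9
  have hL1 := Real.log_two_lt_d9
  have hu0 : 0 ≤ (1 - x) ^ k := pow_nonneg (by linarith) k
  have hLu : Real.log 2 * (1 - x) ^ k ≤ (1 - x) ^ k := by nlinarith
  have hq4 : 4 * q ≤ x * (4 / k) := by
    rw [mul_div_assoc', le_div_iff₀ hk0]; linarith
  have hs := ent_small x hx0.le hx1
  have hpb := pow_bound x k hx0.le hx1
  have hkx : 0 < k * x := by positivity
  have heb := exp_bound (k * x) hkx.le
  rcases le_or_gt x (1 / 8) with hx8 | hx8
  · rcases le_or_gt (k * x) 1 with hy | hy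
    · rcases le_or_gt (k ^ 2 * x) 1 with hz | hz
      · -- region A
        have hl : -Real.log x ≤ k * Real.log 2 - Real.log k := by
          have := Real.log_le_log (by positivity) hx
          rw [Real.log_mul hk0.ne' hq0.ne', hq, Real.log_pow, one_div, Real.log_inv] at this
          linarith
        have h1 : 1 / (1 + k * x) ≤ 1 - k * x + (k * x) ^ 2 := by
          rw [div_le_iff₀ (by positivity)]
          nlinarith [pow_pos hkx 3]
        have h2 : (k * x) ^ 2 ≤ x := by nlinarith
        have h3 : Real.log 2 * (1 - x) ^ k ≤ Real.log 2 * (1 - k * x) + x := by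
          have : (1 - x) ^ k ≤ 1 - k * x + x := by linarith
          have := mul_le_mul_of_nonneg_left this (by linarith : 0 ≤ Real.log 2)
          nlinarith
        have h4 := mul_le_mul_of_nonneg_left hl hx0.le
        have h5 := mul_lt_mul_of_pos_left e1 hx0
        linarith
      · -- region B
        have hl : -Real.log x ≤ 2 * Real.log k := by
          have := Real.log_le_log (by norm_num) hz.le
          rw [Real.log_mul (by positivity) hx0.ne', Real.log_pow, Real.log_one] at this
          push_cast at this
          linarith
        have h1 : 1 / (1 + k * x) ≤ 1 - k * x / 2 := by
          rw [div_le_iff₀ (by positivity)]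
          nlinarith
        have h3 : Real.log 2 * (1 - x) ^ k ≤ Real.log 2 * (1 - k * x / 2) :=
          mul_le_mul_of_nonneg_left (by linarith) (by linarith)
        have h4 := mul_le_mul_of_nonneg_left hl hx0.le
        have h5 := mul_lt_mul_of_pos_left e2 hx0
        linarith
    · -- region C
      have h1 : (1 - x) ^ k ≤ 37 / 100 := by
        have : Real.exp (-(k * x)) ≤ Real.exp (-1) := Real.exp_le_exp.2 (by linarith)
        linarith [Real.exp_neg_one_lt_d9]
      have h3 : Real.log 2 * (1 - x) ^ k ≤ Real.log 2 * (37 / 100) :=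
        mul_le_mul_of_nonneg_left h1 (by linarith)
      have h4 := Real.log_le_sub_one_of_pos (x := (8 * x)⁻¹) (by positivity)
      rw [Real.log_inv, Real.log_mul (by norm_num) hx0.ne',
        show (8 : ℝ) = 2 ^ 3 by norm_num, Real.log_pow] at h4
      push_cast at h4
      have h5 := mul_le_mul_of_nonneg_left h4 hx0.le
      have h6 : x * ((2 ^ 3 * x)⁻¹ - 1) = 1 / 8 - x := by field_simp; ring
      rw [h6] at h5
      have h7 : x * Real.log 2 ≤ 1 / 8 * Real.log 2 :=
        mul_le_mul_of_nonneg_right hx8 (by linarith)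
      linarith
  · have ht2 : k ^ 2 * q ≤ (x - 1 / 2) ^ 2 := by
      rw [← sq_abs (x - 1 / 2), ← hwq, ← mul_pow]
      exact pow_le_pow_left₀ (by positivity) hxt 2
    have he := ent_two x hx0.le hx1
    have hk2 : 100 * q ≤ k ^ 2 * q := by
      apply mul_le_mul_of_nonneg_right _ hq0.le
      nlinarith
    rcases le_or_gt (1 / 2 - x) (1 / k) with ht | ht
    · have h1 : (1 - x) ^ k ≤ q * 9 := by
        have h2 : 1 - x ≤ 1 / 2 * (1 + 2 / k) := by
          have : (1 : ℝ) / 2 * (1 + 2 / k) = 1 / 2 + 1 / k := by ring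
          linarith
        calc (1 - x) ^ k ≤ (1 / 2 * (1 + 2 / k)) ^ k := pow_le_pow_left₀ (by linarith) h2 k
          _ = q * (1 + 2 / k) ^ k := by rw [mul_pow, hq]
          _ ≤ q * 9 := by
            apply mul_le_mul_of_nonneg_left _ hq0.le
            have h3 : (1 + 2 / k : ℝ) ≤ Real.exp (2 / k) := by
              linarith [Real.add_one_le_exp (2 / k : ℝ)]
            calc (1 + 2 / k : ℝ) ^ k ≤ Real.exp (2 / k) ^ k :=
                  pow_le_pow_left₀ (by positivity) h3 k
              _ = Real.exp 1 ^ 2 := by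
                  rw [← Real.exp_nat_mul, ← Real.exp_nat_mul]
                  congr 1
                  push_cast
                  field_simp
              _ ≤ 9 := by nlinarith [Real.exp_one_lt_d9, Real.exp_pos 1]
      linarith
    · have h1 : (1 - x) ^ k ≤ (9 / 10) ^ k := pow_le_pow_left₀ (by linarith) (by linarith) k
      have h2 : 1 / (k : ℝ) ^ 2 ≤ (x - 1 / 2) ^ 2 := by
        have := pow_le_pow_left₀ (by positivity) ht.le 2
        rw [div_pow, one_pow] at this
        nlinarith
      have h3 : (9 / 10 : ℝ) ^ k + 4 * q < 1 / k ^ 2 / 2 := by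
        rw [div_div, lt_div_iff₀ (by positivity), hq]
        nlinarith
      linarith

lemma ev_all : ∃ k0 : ℕ, ∀ k : ℕ, k0 ≤ k → 10 ≤ k ∧ 2 + 4 / (k : ℝ) < Real.log k ∧
    2 * Real.log k + 1 + 4 / (k : ℝ) < Real.log 2 * k / 2 ∧ (1 / 2 : ℝ) ^ k < 1 / 1000 ∧
    (k : ℝ) ^ 2 * (9 / 10) ^ k + 4 * ((k : ℝ) ^ 2 * (1 / 2) ^ k) < 1 / 2 := by
  rw [← Filter.eventually_atTop]
  have t1 : Filter.Tendsto (fun k : ℕ => Real.log (k : ℝ)) Filter.atTop Filter.atTop :=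
    Real.tendsto_log_atTop.comp tendsto_natCast_atTop_atTop
  have t2 : ∀ᶠ k : ℕ in Filter.atTop, Real.log (k : ℝ) ≤ 1 / 16 * k := by
    have := (Real.isLittleO_log_id_atTop.comp_tendsto
      (tendsto_natCast_atTop_atTop (R := ℝ))).bound (c := 1 / 16) (by norm_num)
    filter_upwards [this] with k hk
    simp only [Function.comp, id, Real.norm_eq_abs, Nat.abs_cast] at hk
    exact (le_abs_self _).trans hk
  have t3 := tendsto_pow_atTop_nhds_zero_of_lt_one (r := (1 / 2 : ℝ)) (by norm_num) (by norm_num)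
  have t4 := (tendsto_pow_const_mul_const_pow_of_lt_one 2 (r := (9 / 10 : ℝ)) (by norm_num)
    (by norm_num)).add ((tendsto_pow_const_mul_const_pow_of_lt_one 2 (r := (1 / 2 : ℝ))
    (by norm_num) (by norm_num)).const_mul 4)
  filter_upwards [Filter.eventually_ge_atTop 10, t1.eventually_gt_atTop 3, t2,
    t3.eventually_lt_const (show (0 : ℝ) < 1 / 1000 by norm_num),
    t4.eventually_lt_const (show (0 : ℝ) + 4 * 0 < 1 / 2 by norm_num)] with k h1 h2 h3 h4 h5
  have hkR : (10 : ℝ) ≤ k := by exact_mod_cast h1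
  have h6 : 4 / (k : ℝ) ≤ 4 / 10 := div_le_div_of_nonneg_left (by norm_num) (by norm_num) hkR
  refine ⟨h1, by linarith, ?_, h4, h5⟩
  nlinarith [Real.log_two_gt_d9]


/-- For all large `k`, all `0 < c ≤ 2` and `r = 2^k ln 2 - c`, and all
`x ∈ [k 2^{-k}, 1]` with `|x - 1/2| ≥ k 2^{-k/2}`:
`ln 2 + h(x) + r ln(1 - 2^{1-k} + 2^{-k}(1-x)^k) < 0`, where `h` is the binary entropy
(note `Real.log 0 = 0`, so the formula extends `h` continuously to `0` and `1`). -/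
theorem statement8 :
    ∃ k0 : ℕ, ∀ k : ℕ, k0 ≤ k → ∀ c : ℝ, 0 < c → c ≤ 2 →
      ∀ x : ℝ, (k : ℝ) * (2 : ℝ) ^ (-(k : ℝ)) ≤ x → x ≤ 1 →
        (k : ℝ) * (2 : ℝ) ^ (-(k : ℝ) / 2) ≤ |x - 1 / 2| →
        Real.log 2 + (-x * Real.log x - (1 - x) * Real.log (1 - x)) +
            ((2 : ℝ) ^ k * Real.log 2 - c) *
              Real.log (1 - (2 : ℝ) ^ ((1 : ℤ) - (k : ℤ)) +
                (2 : ℝ) ^ (-(k : ℤ)) * (1 - x) ^ k) < 0 := by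

  obtain ⟨k0, hk0⟩ := ev_all
  refine ⟨k0, fun k hk c hc0 hc2 x hx hx1 hxt => ?_⟩
  obtain ⟨hk10, e1, e2, e3, e4⟩ := hk0 k hk
  set q : ℝ := (1 / 2) ^ k with hq
  have hq0 : 0 < q := by positivity
  have r1 : (2 : ℝ) ^ (-(k : ℝ)) = q := by
    rw [Real.rpow_neg (by norm_num), Real.rpow_natCast, hq, one_div, inv_pow]
  have r2 : ((2 : ℝ) ^ (-(k : ℝ) / 2)) ^ 2 = q := by
    rw [← r1, ← Real.rpow_natCast, ← Real.rpow_mul (by norm_num)]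
    congr 1
    push_cast
    ring
  have r3 : (2 : ℝ) ^ (-(k : ℤ)) = q := by
    rw [zpow_neg, zpow_natCast, hq, one_div, inv_pow]
  have r4 : (2 : ℝ) ^ ((1 : ℤ) - (k : ℤ)) = 2 * q := by
    rw [sub_eq_add_neg, zpow_add₀ (by norm_num), r3, zpow_one]
  have r5 : (2 : ℝ) ^ k * q = 1 := by
    rw [hq, ← mul_pow]; norm_num
  rw [r1] at hx
  have hc := core_s8 k q _ x hk10 hq (by positivity) r2 e1 e2 e3 e4 hx hx1 hxt
  rw [r3, r4]
  have hx0 : 0 ≤ x := le_trans (by positivity) hx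
  set u := (1 - x) ^ k with hu
  have hu0 : 0 ≤ u := pow_nonneg (by linarith) k
  have hu1 : u ≤ 1 := pow_le_one₀ (by linarith) (by linarith)
  have hlog : Real.log (1 - 2 * q + q * u) ≤ -(q * (2 - u)) := by
    have := Real.log_le_sub_one_of_pos (x := 1 - 2 * q + q * u) (by nlinarith)
    linarith
  have hL0 := Real.log_two_gt_d9
  have hr : 0 ≤ (2 : ℝ) ^ k * Real.log 2 - c := by
    have : (1000 : ℝ) ≤ 2 ^ k := by
      by_contra hcon
      push Not at hcon
      nlinarith
    nlinarith
  have h1 := mul_le_mul_of_nonneg_left hlog hr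
  have h2 : ((2 : ℝ) ^ k * Real.log 2 - c) * (-(q * (2 - u)))
      = -(((2 : ℝ) ^ k * q) * Real.log 2 * (2 - u)) + c * (q * (2 - u)) := by ring
  rw [h2, r5] at h1
  have h3 : c * (q * (2 - u)) ≤ 2 * (q * 2) := by
    apply mul_le_mul hc2 _ (by nlinarith) (by norm_num)
    nlinarith
  linarith
end

section
/- There exist an integer k0 and constants C, c > 0 such that for every k >= k0 and every density r = 2^k * ln 2 - rho with 0 < rho <= 2, the degree sequence (d_l)_l of the uniform random formula Phi = Phi_k(n, floor(r*n)) satisfies the following with high probability: (1) for every fixed eps > 0, | sum over x in V of (d_x - d_{not x})^2 - k*m | <= eps * k * m; (2) (1/n) * sum over x in V of |d_x - d_{not x}| <= C * k^c * 2^{k/2}; (3) if M denotes a set of n literals of largest degree, then | (1/(k*m)) * sum over l in M of d_l - 1/2 | <= C * k^c * 2^{-k/2}. -/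
open Classical Finset Filter

noncomputable section

section Moments

variable {ι α X : Type*} [Fintype ι] [DecidableEq ι] [Fintype α] [Fintype X]

lemma sum_update_eq (F : (ι → α) → ℝ) (p : ι) :
    ∑ f : ι → α, ∑ a : α, F (Function.update f p a) = (Fintype.card α : ℝ) * ∑ f, F f := by
  have inv : Function.Involutive
      (fun z : (ι → α) × α => ((Function.update z.1 p z.2, z.1 p) : (ι → α) × α)) := by
    rintro ⟨f, a⟩
    simp
  have h := Equiv.sum_comp inv.toPerm (fun z : (ι → α) × α => F z.1)
  rw [Fintype.sum_prod_type, Fintype.sum_prod_type] at h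
  simp only [Function.Involutive.coe_toPerm] at h
  rw [h]
  simp [Finset.mul_sum]

lemma sum_zero_of_update (F : (ι → α) → ℝ) (p : ι)
    (h : ∀ f, ∑ a : α, F (Function.update f p a) = 0) : ∑ f, F f = 0 := by
  have h1 := sum_update_eq F p
  simp only [h, Finset.sum_const_zero] at h1
  rcases mul_eq_zero.mp h1.symm with h2 | h2
  · have : IsEmpty α := Fintype.card_eq_zero_iff.mp (by exact_mod_cast h2)
    have : IsEmpty (ι → α) := ⟨fun f => this.elim (f p)⟩
    simp
  · exact h2

lemma sum_le_of_update (F : (ι → α) → ℝ) (p : ι) (c : ℝ)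
    (h : ∀ f, ∑ a : α, F (Function.update f p a) ≤ c) :
    (Fintype.card α : ℝ) * ∑ f, F f ≤ c * (Fintype.card (ι → α) : ℝ) := by
  rw [← sum_update_eq F p]
  calc _ ≤ ∑ f : ι → α, c := Finset.sum_le_sum fun f _ => h f
    _ = _ := by rw [Finset.sum_const, Finset.card_univ, nsmul_eq_mul, mul_comm]

/-- cross-moment bound -/
lemma cross_bound (g : α → α → ℝ) (hs : ∀ a b, g a b = g b a) (h0 : ∀ b, ∑ a, g a b = 0)
    (h2 : ∀ b, ∑ a, g a b ^ 2 ≤ 2) (p q p' q' : ι) (hpq : p ≠ q) (hpq' : p' ≠ q') :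
    (Fintype.card α : ℝ) * ∑ f : ι → α, g (f p) (f q) * g (f p') (f q') ≤
      2 * (Fintype.card (ι → α) : ℝ) *
        ((if (p', q') = (p, q) then 1 else 0) + (if (p', q') = (q, p) then 1 else 0)) := by
  have hB : (0:ℝ) ≤ 2 * (Fintype.card (ι → α) : ℝ) := by positivity
  by_cases hA : (p', q') = (p, q)
  · obtain ⟨rfl, rfl⟩ := Prod.mk.inj hA
    have hne : ¬ ((p', q') = (q', p')) := fun h => hpq (Prod.mk.inj h).1
    simp only [if_true, if_neg hne, add_zero, mul_one]
    apply sum_le_of_update _ p'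
    intro f
    simp only [Function.update_self, Function.update_of_ne hpq.symm, ← pow_two]
    exact h2 _
  by_cases hC : (p', q') = (q, p)
  · obtain ⟨rfl, rfl⟩ := Prod.mk.inj hC
    simp only [if_true, if_neg hA, zero_add, mul_one]
    apply sum_le_of_update _ q'
    intro f
    simp only [Function.update_self, Function.update_of_ne hpq']
    refine le_trans (le_of_eq ?_) (h2 (f p'))
    refine Finset.sum_congr rfl fun a _ => ?_
    rw [pow_two, hs (f p') a]
  rw [if_neg hA, if_neg hC]
  simp only [add_zero, mul_zero]
  refine le_of_eq ?_
  rw [mul_eq_zero]; right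
  by_cases hp : p ≠ p' ∧ p ≠ q'
  · apply sum_zero_of_update _ p
    intro f
    simp only [Function.update_self, Function.update_of_ne hpq.symm,
      Function.update_of_ne hp.1.symm, Function.update_of_ne hp.2.symm, ← Finset.sum_mul, h0, zero_mul]
  · have hq : q ≠ p' ∧ q ≠ q' := by
      simp only [Prod.mk.injEq] at hA hC
      constructor <;> rintro rfl <;> apply hp <;> constructor <;> rintro rfl <;> simp_all
    apply sum_zero_of_update _ q
    intro f
    simp only [Function.update_self, Function.update_of_ne hpq,
      Function.update_of_ne hq.1.symm, Function.update_of_ne hq.2.symm, ← Finset.sum_mul]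
    simp only [hs (f p), h0, zero_mul]

lemma second_moment (g : α → α → ℝ) (hs : ∀ a b, g a b = g b a) (h0 : ∀ b, ∑ a, g a b = 0)
    (h2 : ∀ b, ∑ a, g a b ^ 2 ≤ 2) :
    (Fintype.card α : ℝ) *
      ∑ f : ι → α, (∑ z : ι × ι, if z.1 = z.2 then 0 else g (f z.1) (f z.2)) ^ 2 ≤
      4 * (Fintype.card ι : ℝ) ^ 2 * (Fintype.card (ι → α) : ℝ) := by
  have e : (Fintype.card α : ℝ) *
      ∑ f : ι → α, (∑ z : ι × ι, if z.1 = z.2 then 0 else g (f z.1) (f z.2)) ^ 2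
      = ∑ z : ι × ι, ∑ z' : ι × ι, (Fintype.card α : ℝ) * ∑ f : ι → α,
        (if z.1 = z.2 then 0 else g (f z.1) (f z.2)) *
        (if z'.1 = z'.2 then 0 else g (f z'.1) (f z'.2)) := by
    simp only [← Finset.mul_sum]
    congr 1
    simp only [pow_two, Finset.sum_mul_sum]
    rw [Finset.sum_comm]
    refine Finset.sum_congr rfl fun z _ => ?_
    rw [Finset.sum_comm]
  rw [e]
  have hB : (0:ℝ) ≤ 2 * (Fintype.card (ι → α) : ℝ) := by positivity
  calc _ ≤ ∑ z : ι × ι, ∑ z' : ι × ι, 2 * (Fintype.card (ι → α) : ℝ) *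
        ((if z' = z then 1 else 0) + (if z' = (z.2, z.1) then 1 else 0)) := by
        refine Finset.sum_le_sum fun z _ => Finset.sum_le_sum fun z' _ => ?_
        obtain ⟨p, q⟩ := z
        obtain ⟨p', q'⟩ := z'
        by_cases h : p = q
        · simp only [h, if_true, zero_mul, Finset.sum_const_zero, mul_zero]
          apply mul_nonneg hB
          split_ifs <;> norm_num
        by_cases h' : p' = q'
        · simp only [h', if_true, mul_zero, Finset.sum_const_zero]
          apply mul_nonneg hB
          split_ifs <;> norm_num
        simp only [if_neg h, if_neg h']
        exact cross_bound g hs h0 h2 p q p' q' h h'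
    _ = _ := by
        simp only [← Finset.mul_sum, Finset.sum_add_distrib, Finset.sum_ite_eq', Finset.mem_univ,
          if_true, Finset.sum_const, Finset.card_univ, Fintype.card_prod, nsmul_eq_mul]
        push_cast
        ring

lemma sq_sum_eq (w : X → α → ℝ) (D : ℝ) (hD : ∀ a, ∑ x, w x a * w x a = D) (f : ι → α) :
    ∑ x, (∑ p, w x (f p)) ^ 2 - (Fintype.card ι : ℝ) * D =
      ∑ z : ι × ι, if z.1 = z.2 then 0 else ∑ x, w x (f z.1) * w x (f z.2) := by
  have h1 : ∑ x, (∑ p, w x (f p)) ^ 2 = ∑ z : ι × ι, ∑ x, w x (f z.1) * w x (f z.2) := by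
    rw [Finset.sum_comm]
    refine Finset.sum_congr rfl fun x _ => ?_
    rw [pow_two, Finset.sum_mul_sum, Fintype.sum_prod_type]
  have h2 : (Fintype.card ι : ℝ) * D = ∑ z : ι × ι, if z.1 = z.2 then D else 0 := by
    rw [Fintype.sum_prod_type]
    simp
  rw [h1, h2, ← Finset.sum_sub_distrib]
  refine Finset.sum_congr rfl fun z _ => ?_
  split_ifs with h
  · rw [h, hD, sub_self]
  · rw [sub_zero]

end Moments

lemma chebyshev_prF {X : Type*} [Fintype X] (n k m : ℕ) (hn : 0 < n) (hN : 0 < k * m)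
    (w : X → Lit n → ℝ) (D : ℝ) (hD : ∀ a, ∑ x, w x a * w x a = D)
    (h0 : ∀ x, ∑ a, w x a = 0)
    (h2 : ∀ b, ∑ a, (∑ x, w x a * w x b) ^ 2 ≤ 2) (eps : ℝ) (heps : 0 < eps) :
    1 - 2 / (n * eps ^ 2) ≤ prF n k m fun Φ =>
      |∑ x, (∑ p : Fin m × Fin k, w x (Φ p.1 p.2)) ^ 2 - (k : ℝ) * m * D| ≤
        eps * ((k : ℝ) * m) := by
  have hsm := second_moment (ι := Fin m × Fin k) (fun a b => ∑ x, w x a * w x b)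
    (fun a b => Finset.sum_congr rfl fun x _ => mul_comm _ _)
    (fun b => by rw [Finset.sum_comm]; simp [← Finset.sum_mul, h0]) h2
  simp only [← sq_sum_eq w D hD] at hsm
  rw [← Equiv.sum_comp (Equiv.curry (Fin m) (Fin k) (Lit n)).symm] at hsm
  simp only [Equiv.curry_symm_apply, Function.uncurry_def] at hsm
  have hcard : (Fintype.card (Fin m × Fin k → Lit n)) = Fintype.card (Formula n k m) :=
    Fintype.card_congr (Equiv.curry (Fin m) (Fin k) (Lit n))
  rw [hcard] at hsm
  simp only [Fintype.card_prod, Fintype.card_fin, Fintype.card_bool] at hsm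
  push_cast at hsm
  set S : Formula n k m → ℝ := fun Φ =>
    ∑ x, (∑ p : Fin m × Fin k, w x (Φ p.1 p.2)) ^ 2 - (k : ℝ) * m * D with hS
  have hSe : ∀ Φ : Formula n k m, ∑ x, (∑ p : Fin m × Fin k, w x (Φ p.1 p.2)) ^ 2
      - (m : ℝ) * k * D = S Φ := by
    intro Φ; simp only [hS]; ring
  simp only [hSe] at hsm
  set T := eps * ((k : ℝ) * m) with hT
  have hNr : (0:ℝ) < (k:ℝ) * m := by exact_mod_cast hN
  have hTpos : 0 < T := mul_pos heps hNr
  have hnr : (0:ℝ) < n := by exact_mod_cast hn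
  have : Nonempty (Formula n k m) := ⟨fun _ _ => (⟨0, hn⟩, true)⟩
  have hΩ : (0:ℝ) < Fintype.card (Formula n k m) := by exact_mod_cast Fintype.card_pos
  have hbad : ((univ.filter fun Φ : Formula n k m => ¬ |S Φ| ≤ T).card : ℝ) * T ^ 2 ≤
      ∑ Φ, S Φ ^ 2 := by
    calc _ = ∑ Φ ∈ univ.filter fun Φ : Formula n k m => ¬ |S Φ| ≤ T, T ^ 2 := by
          rw [Finset.sum_const, nsmul_eq_mul]
      _ ≤ ∑ Φ ∈ univ.filter fun Φ : Formula n k m => ¬ |S Φ| ≤ T, S Φ ^ 2 := by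
          refine Finset.sum_le_sum fun Φ h => ?_
          rw [Finset.mem_filter] at h
          rw [← sq_abs (S Φ)]
          exact pow_le_pow_left₀ hTpos.le (not_le.mp h.2).le 2
      _ ≤ _ := Finset.sum_le_sum_of_subset_of_nonneg (Finset.subset_univ _)
          fun _ _ _ => sq_nonneg _
  have hsplit : ((univ.filter fun Φ : Formula n k m => |S Φ| ≤ T).card : ℝ) +
      ((univ.filter fun Φ : Formula n k m => ¬ |S Φ| ≤ T).card : ℝ) =
      Fintype.card (Formula n k m) := by
    have := Finset.card_filter_add_card_filter_not (s := (univ : Finset (Formula n k m)))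
      (fun Φ => |S Φ| ≤ T)
    rw [Finset.card_univ] at this
    exact_mod_cast this
  unfold prF
  rw [le_div_iff₀ hΩ]
  set b := ((univ.filter fun Φ : Formula n k m => ¬ |S Φ| ≤ T).card : ℝ)
  set Ω := (Fintype.card (Formula n k m) : ℝ)
  have hb : b ≤ 2 / (n * eps ^ 2) * Ω := by
    rw [div_mul_eq_mul_div, le_div_iff₀ (by positivity)]
    have h3 : (n:ℝ) * 2 * (b * T ^ 2) ≤ 4 * (m * k) ^ 2 * Ω :=
      le_trans (mul_le_mul_of_nonneg_left hbad (by positivity)) hsm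
    have h4 : (b * (n * eps ^ 2)) * ((k:ℝ) * m) ^ 2 ≤ (2 * Ω) * ((k:ℝ) * m) ^ 2 := by
      rw [hT] at h3; nlinarith
    exact le_of_mul_le_mul_right h4 (by positivity)
  linarith

lemma prF_mono (n k m : ℕ) (E F : Formula n k m → Prop) (h : ∀ Φ, E Φ → F Φ) :
    prF n k m E ≤ prF n k m F := by
  unfold prF
  gcongr
  exact h _

lemma prF_le_one (n k m : ℕ) (E : Formula n k m → Prop) : prF n k m E ≤ 1 := by
  unfold prF
  apply div_le_one_of_le₀ _ (by positivity)
  exact_mod_cast Finset.card_le_univ _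

/-- signed weight -/
def wS (n : ℕ) (x : Fin n) (a : Lit n) : ℝ := if a.1 = x then (if a.2 then 1 else -1) else 0

/-- centred weight -/
def wC (n : ℕ) (l a : Lit n) : ℝ := (if a = l then 1 else 0) - 1 / (2 * n)

lemma occ_eq (n k m : ℕ) (Φ : Formula n k m) (l : Lit n) :
    (occ n k m Φ l : ℝ) = ∑ p : Fin m × Fin k, if Φ p.1 p.2 = l then (1:ℝ) else 0 := by
  unfold occ
  simp

lemma wS_sum (n k m : ℕ) (Φ : Formula n k m) (x : Fin n) :
    ∑ p : Fin m × Fin k, wS n x (Φ p.1 p.2) =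
      (occ n k m Φ (x, true) : ℝ) - (occ n k m Φ (x, false) : ℝ) := by
  rw [occ_eq, occ_eq, ← Finset.sum_sub_distrib]
  refine Finset.sum_congr rfl fun p _ => ?_
  rcases Φ p.1 p.2 with ⟨y, s⟩
  unfold wS
  cases s <;> by_cases h : y = x <;> simp [h]

lemma wC_sum (n k m : ℕ) (Φ : Formula n k m) (l : Lit n) :
    ∑ p : Fin m × Fin k, wC n l (Φ p.1 p.2) =
      (occ n k m Φ l : ℝ) - (k : ℝ) * m / (2 * n) := by
  unfold wC
  rw [Finset.sum_sub_distrib, ← occ_eq]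
  simp
  ring

lemma wS_prod (n : ℕ) (a b : Lit n) : ∑ x, wS n x a * wS n x b =
    if a.1 = b.1 then (if a.2 = b.2 then 1 else -1) else 0 := by
  obtain ⟨y, s⟩ := a
  obtain ⟨z, t⟩ := b
  unfold wS
  by_cases h : y = z
  · subst h
    cases s <;> cases t <;> simp
  · simp [h]

lemma wC_prod (n : ℕ) (hn : 0 < n) (a b : Lit n) : ∑ x, wC n x a * wC n x b = wC n a b := by
  have hnr : (n:ℝ) ≠ 0 := by positivity
  unfold wC
  simp only [sub_mul, mul_sub, Finset.sum_sub_distrib, ← Finset.mul_sum, ← Finset.sum_mul]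
  simp
  simp only [eq_comm (a := b) (b := a)]
  field_simp
  ring_nf

lemma S_bound (n k m : ℕ) (hn : 0 < n) (hN : 0 < k * m) (eps : ℝ) (heps : 0 < eps) :
    1 - 2 / (n * eps ^ 2) ≤ prF n k m fun Φ =>
      |(∑ x : Fin n, ((occ n k m Φ (x, true) : ℝ) - (occ n k m Φ (x, false) : ℝ)) ^ 2) -
                  (k : ℝ) * m| ≤ eps * ((k : ℝ) * m) := by
  have h := chebyshev_prF n k m hn hN (wS n) 1 (fun a => by simp [wS_prod])
    (fun x => by
      rw [Fintype.sum_prod_type]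
      simp [wS]) 
    (fun b => by
      simp only [wS_prod]
      rw [Fintype.sum_prod_type]
      obtain ⟨y, t⟩ := b
      cases t <;> simp [ite_pow, Finset.sum_add_distrib] <;> norm_num) eps heps
  simpa only [wS_sum, mul_one] using h

lemma C_bound (n k m : ℕ) (hn : 0 < n) (hN : 0 < k * m) :
    1 - 2 / (n : ℝ) ≤ prF n k m fun Φ =>
      ∑ l : Lit n, ((occ n k m Φ l : ℝ) - (k : ℝ) * m / (2 * n)) ^ 2 ≤ 2 * ((k : ℝ) * m) := by
  have hnr : (0:ℝ) < n := by exact_mod_cast hn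
  have h := chebyshev_prF n k m hn hN (wC n) (1 - 1 / (2 * n))
    (fun a => by rw [wC_prod n hn]; simp [wC])
    (fun x => by
      simp [wC]
      field_simp
      ring)
    (fun b => by
      simp only [wC_prod n hn]
      have h1 : ∀ a, wC n a b ^ 2 = wC n a b * wC n a b := fun a => pow_two _
      simp only [h1, wC_prod n hn]
      simp only [wC, if_true]
      have : (0:ℝ) ≤ 1 / (2 * n) := by positivity
      linarith) 1 one_pos
  simp only [wC_sum, one_pow, mul_one, one_mul] at h
  refine h.trans (prF_mono n k m _ _ fun Φ hΦ => ?_)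
  have h3 := (abs_le.mp hΦ).2
  have h4 : (0:ℝ) ≤ (k:ℝ) * m * (1 / (2 * n)) := by positivity
  linarith

lemma det_two (n k m : ℕ) (hn : 0 < n) (Φ : Formula n k m)
    (hV : ∑ l : Lit n, ((occ n k m Φ l : ℝ) - (k : ℝ) * m / (2 * n)) ^ 2 ≤ 2 * ((k : ℝ) * m))
    (hk : 1 ≤ k) (hm : (m : ℝ) ≤ 2 ^ k * n) :
    (1 / (n : ℝ)) *
      ∑ x : Fin n, |(occ n k m Φ (x, true) : ℝ) - (occ n k m Φ (x, false) : ℝ)| ≤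
      2 * (k : ℝ) * (2 : ℝ) ^ ((k : ℝ) / 2) := by
  have hnr : (0:ℝ) < n := by exact_mod_cast hn
  have hk' : (1:ℝ) ≤ k := by exact_mod_cast hk
  set D : Fin n → ℝ := fun x => (occ n k m Φ (x, true) : ℝ) - (occ n k m Φ (x, false) : ℝ) with hD
  have h1 : ∑ x, |D x| ^ 2 ≤ 4 * ((k : ℝ) * m) := by
    rw [Fintype.sum_prod_type] at hV
    simp only [Fintype.sum_bool] at hV
    have : ∑ x, |D x| ^ 2 ≤ ∑ x : Fin n, 2 * (((occ n k m Φ (x, true) : ℝ) - (k : ℝ) * m / (2 * n)) ^ 2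
        + ((occ n k m Φ (x, false) : ℝ) - (k : ℝ) * m / (2 * n)) ^ 2) := by
      refine Finset.sum_le_sum fun x _ => ?_
      rw [sq_abs]
      simp only [hD]
      nlinarith [sq_nonneg (((occ n k m Φ (x, true) : ℝ) - (k : ℝ) * m / (2 * n)) + ((occ n k m Φ (x, false) : ℝ) - (k : ℝ) * m / (2 * n)))]
    rw [← Finset.mul_sum] at this
    linarith
  have h2 : (∑ x, |D x|) ^ 2 ≤ n * ∑ x, |D x| ^ 2 := by
    have := sq_sum_le_card_mul_sum_sq (s := (univ : Finset (Fin n))) (f := fun x => |D x|)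
    simpa using this
  have h3 : ((2:ℝ) ^ ((k:ℝ)/2)) ^ 2 = 2 ^ k := by
    rw [← Real.rpow_natCast, ← Real.rpow_mul (by norm_num)]
    norm_num
  rw [one_div, inv_mul_le_iff₀ hnr]
  refine abs_le_of_sq_le_sq' ?_ (by positivity) |>.2
  calc (∑ x, |D x|) ^ 2 ≤ n * (4 * (k * m)) := h2.trans (by gcongr)
    _ ≤ n * (4 * (k * (2 ^ k * n))) := by gcongr
    _ ≤ n * (4 * ((k * k) * (2 ^ k * n))) := by
        gcongr
        nlinarith
    _ = _ := by rw [← h3]; ring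

lemma det_three (n k m : ℕ) (hn : 0 < n) (Φ : Formula n k m)
    (hV : ∑ l : Lit n, ((occ n k m Φ l : ℝ) - (k : ℝ) * m / (2 * n)) ^ 2 ≤ 2 * ((k : ℝ) * m))
    (hk : 1 ≤ k) (hm : (2:ℝ) ^ k / 2 * n ≤ m) (M : Finset (Lit n)) (hM : M.card = n) :
    |(1 / ((k : ℝ) * m)) * (∑ l ∈ M, (occ n k m Φ l : ℝ)) - 1 / 2| ≤
      2 * (k : ℝ) * (2 : ℝ) ^ (-(k : ℝ) / 2) := by
  have hnr : (0:ℝ) < n := by exact_mod_cast hn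
  have hk' : (1:ℝ) ≤ k := by exact_mod_cast hk
  have hk0 : (0:ℝ) < k := by linarith
  have hm0 : (0:ℝ) < m := lt_of_lt_of_le (by positivity) hm
  set d : Lit n → ℝ := fun l => (occ n k m Φ l : ℝ) - (k : ℝ) * m / (2 * n) with hd
  have e : (1 / ((k : ℝ) * m)) * (∑ l ∈ M, (occ n k m Φ l : ℝ)) - 1 / 2 =
      (∑ l ∈ M, d l) / (k * m) := by
    simp only [hd, Finset.sum_sub_distrib, Finset.sum_const, hM, nsmul_eq_mul]
    field_simp
  have h2 : (∑ l ∈ M, d l) ^ 2 ≤ n * ∑ l ∈ M, d l ^ 2 := by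
    have := sq_sum_le_card_mul_sum_sq (s := M) (f := d)
    rwa [hM] at this
  have h1 : ∑ l ∈ M, d l ^ 2 ≤ 2 * (k * m) :=
    (Finset.sum_le_sum_of_subset_of_nonneg (Finset.subset_univ _)
          fun _ _ _ => sq_nonneg _).trans hV
  have h3 : ((2:ℝ) ^ (-(k:ℝ)/2)) ^ 2 * 2 ^ k = 1 := by
    rw [← Real.rpow_natCast, ← Real.rpow_mul (by norm_num), ← Real.rpow_natCast,
      ← Real.rpow_add (by norm_num)]
    norm_num
  rw [e, abs_div, abs_of_pos (show (0:ℝ) < k * m by positivity), div_le_iff₀ (by positivity)]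
  refine abs_le_of_sq_le_sq ?_ (by positivity)
  set u := (2:ℝ) ^ (-(k:ℝ)/2)
  calc (∑ l ∈ M, d l) ^ 2 ≤ n * (2 * (k * m)) := h2.trans (by gcongr)
    _ = 4 * k * m * u ^ 2 * (2 ^ k / 2 * n) := by linear_combination (-2 * k * m * n : ℝ) * h3
    _ ≤ 4 * k * m * u ^ 2 * m := by gcongr
    _ = 4 * (k * 1 * 1 * 1) * m ^ 2 * u ^ 2 := by ring
    _ ≤ 4 * (k * k * k * k) * m ^ 2 * u ^ 2 := by gcongr
    _ = _ := by ring

lemma m_bounds (k n : ℕ) (hk : 4 ≤ k) (hn : 0 < n) (rho : ℝ) (h0 : 0 < rho) (h2 : rho ≤ 2) :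
    (2:ℝ) ^ k / 2 * n ≤ (⌊(2 ^ k * Real.log 2 - rho) * (n : ℝ)⌋₊ : ℝ) ∧
    (⌊(2 ^ k * Real.log 2 - rho) * (n : ℝ)⌋₊ : ℝ) ≤ 2 ^ k * n := by
  have hnr : (1:ℝ) ≤ n := by exact_mod_cast hn
  have hp : (16:ℝ) ≤ 2 ^ k := by
    calc (16:ℝ) = 2 ^ 4 := by norm_num
      _ ≤ _ := pow_le_pow_right₀ (by norm_num) hk
  have l1 := Real.log_two_gt_d9
  have l2 := Real.log_two_lt_d9
  have hr : (2:ℝ) ^ k / 2 + 1 ≤ 2 ^ k * Real.log 2 - rho := by nlinarith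
  have hr' : 2 ^ k * Real.log 2 - rho ≤ (2:ℝ) ^ k := by nlinarith
  constructor
  · have := Nat.lt_floor_add_one ((2 ^ k * Real.log 2 - rho) * (n : ℝ))
    nlinarith
  · refine (Nat.floor_le (by apply mul_nonneg <;> nlinarith)).trans ?_
    gcongr

lemma tendsto_of_bound (f : ℕ → ℝ) (c : ℝ) (h1 : ∀ n, f n ≤ 1)
    (h : ∀ n : ℕ, 0 < n → 1 - c / (n : ℝ) ≤ f n) : Tendsto f atTop (nhds 1) := by
  have h3 : Tendsto (fun n : ℕ => 1 - c / (n : ℝ)) atTop (nhds 1) := by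
    simpa using (tendsto_const_div_atTop_nhds_zero_nat c).const_sub 1
  refine tendsto_of_tendsto_of_tendsto_of_le_of_le' h3 tendsto_const_nhds ?_
    (Eventually.of_forall h1)
  filter_upwards [eventually_gt_atTop 0] with n hn using h n hn

/-- There are `k0` and constants `C, c > 0` such that for `k ≥ k0` and
`r = 2^k ln 2 - ρ` with `0 < ρ ≤ 2`, the degree sequence of the random formula whp
satisfies: (1) for every fixed `ε > 0`, `|∑_x (d_x - d_{¬x})² - km| ≤ ε k m`;
(2) `(1/n) ∑_x |d_x - d_{¬x}| ≤ C k^c 2^{k/2}`; and (3) for every set `M` of `n` literals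
of largest degree, `|(1/(km)) ∑_{l ∈ M} d_l - 1/2| ≤ C k^c 2^{-k/2}`. -/
theorem statement9 :
    ∃ (k0 : ℕ) (C c : ℝ), 0 < C ∧ 0 < c ∧
      ∀ k : ℕ, k0 ≤ k → ∀ rho : ℝ, 0 < rho → rho ≤ 2 →
        (∀ eps : ℝ, 0 < eps →
          Tendsto
            (fun n : ℕ =>
              let m := ⌊(2 ^ k * Real.log 2 - rho) * (n : ℝ)⌋₊
              prF n k m fun Φ =>
                |(∑ x : Fin n,
                    ((occ n k m Φ (x, true) : ℝ) - (occ n k m Φ (x, false) : ℝ)) ^ 2) -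
                  (k : ℝ) * m| ≤ eps * ((k : ℝ) * m))
            atTop (nhds 1)) ∧
        Tendsto
          (fun n : ℕ =>
            let m := ⌊(2 ^ k * Real.log 2 - rho) * (n : ℝ)⌋₊
            prF n k m fun Φ =>
              ((1 / (n : ℝ)) *
                  ∑ x : Fin n, |(occ n k m Φ (x, true) : ℝ) - (occ n k m Φ (x, false) : ℝ)| ≤
                C * (k : ℝ) ^ c * (2 : ℝ) ^ ((k : ℝ) / 2)) ∧
              ∀ M : Finset (Lit n), M.card = n →
                (∀ l ∈ M, ∀ l' ∉ M, occ n k m Φ l' ≤ occ n k m Φ l) →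
                |(1 / ((k : ℝ) * m)) * (∑ l ∈ M, (occ n k m Φ l : ℝ)) - 1 / 2| ≤
                  C * (k : ℝ) ^ c * (2 : ℝ) ^ (-(k : ℝ) / 2))
          atTop (nhds 1) := by
  refine ⟨4, 2, 1, by norm_num, by norm_num, ?_⟩
  intro k hk rho h0 h2
  have hN : ∀ n : ℕ, 0 < n → 0 < k * ⌊(2 ^ k * Real.log 2 - rho) * (n : ℝ)⌋₊ := by
    intro n hn
    have hb := (m_bounds k n hk hn rho h0 h2).1
    have : (0:ℝ) < (⌊(2 ^ k * Real.log 2 - rho) * (n : ℝ)⌋₊ : ℝ) :=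
      lt_of_lt_of_le (by positivity) hb
    have : 0 < ⌊(2 ^ k * Real.log 2 - rho) * (n : ℝ)⌋₊ := by exact_mod_cast this
    have : 0 < k := by omega
    positivity
  constructor
  · intro eps heps
    refine tendsto_of_bound _ (2 / eps ^ 2) (fun n => prF_le_one _ _ _ _) fun n hn => ?_
    have h := S_bound n k _ hn (hN n hn) eps heps
    have e : 2 / eps ^ 2 / (n:ℝ) = 2 / (n * eps ^ 2) := by rw [div_div, mul_comm]
    rw [e]
    exact h
  · refine tendsto_of_bound _ 2 (fun n => prF_le_one _ _ _ _) fun n hn => ?_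
    refine (C_bound n k _ hn (hN n hn)).trans (prF_mono _ _ _ _ _ fun Φ hΦ => ?_)
    have hb := m_bounds k n hk hn rho h0 h2
    rw [Real.rpow_one]
    exact ⟨det_two n k _ hn Φ hΦ (by omega) hb.2,
      fun M hM _ => det_three n k _ hn Φ hΦ (by omega) hb.1 M hM⟩
end
end

section
/- There exists an integer k0 such that for every k >= k0 and every density r = 2^k * ln 2 - rho with 0 < rho <= 2, with high probability the degree sequence (d_l)_l of the uniform random formula Phi = Phi_k(n, floor(r*n)) has both of the following properties: for every set S of literals, Vol(S) <= 10 * |S| * max{k*r, ln(n/|S|)}; and for every set S of literals with |S| >= n * 2^{-0.8k}, Vol(S) >= (1/3) * |S| * k * r, where Vol(S) = sum over l in S of d_l. -/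
open Classical Finset Filter

noncomputable section

/-- `Vol(S) = ∑_{l ∈ S} d_l`. -/
def Vol (n k m : ℕ) (Φ : Formula n k m) (S : Finset (Lit n)) : ℕ :=
  ∑ l ∈ S, occ n k m Φ l

lemma vol_eq {n k m : ℕ} (Φ : Formula n k m) (S : Finset (Lit n)) :
    (Vol n k m Φ S : ℝ) = ∑ i : Fin m, ∑ j : Fin k, (if Φ i j ∈ S then (1 : ℝ) else 0) := by
  rw [← Fintype.sum_prod_type' (f := fun i j => if Φ i j ∈ S then (1 : ℝ) else 0)]
  unfold Vol occ
  push_cast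
  simp_rw [Finset.card_filter]
  push_cast
  rw [Finset.sum_comm]
  refine Finset.sum_congr rfl fun p _ => ?_
  rw [Finset.sum_ite_eq]

lemma mgf_eq {n k m : ℕ} (S : Finset (Lit n)) (t : ℝ) :
    ∑ Φ : Formula n k m, Real.exp (t * Vol n k m Φ S)
      = ((2 * n + S.card * (Real.exp t - 1)) ^ k) ^ m := by
  have h1 : ∑ l : Lit n, Real.exp (t * (if l ∈ S then (1 : ℝ) else 0))
      = 2 * n + S.card * (Real.exp t - 1) := by
    have : ∀ l : Lit n, Real.exp (t * (if l ∈ S then (1 : ℝ) else 0))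
        = 1 + (if l ∈ S then (Real.exp t - 1) else 0) := by
      intro l; split_ifs <;> simp
    simp_rw [this]
    rw [Finset.sum_add_distrib, Finset.sum_ite_mem]
    simp [mul_comm]
    ring
  rw [← h1, Fintype.sum_pow, Fintype.sum_pow]
  refine Finset.sum_congr rfl fun Φ _ => ?_
  rw [vol_eq, Finset.mul_sum, Real.exp_sum]
  refine Finset.prod_congr rfl fun i _ => ?_
  rw [Finset.mul_sum, Real.exp_sum]

lemma card_formula (n k m : ℕ) : (Fintype.card (Formula n k m) : ℝ) = ((2 * n : ℝ) ^ k) ^ m := by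
  simp [mul_comm]

lemma mgf_le {n k m : ℕ} (hn : 0 < n) (S : Finset (Lit n)) (t : ℝ) :
    (∑ Φ : Formula n k m, Real.exp (t * Vol n k m Φ S)) / (Fintype.card (Formula n k m) : ℝ)
      ≤ Real.exp (S.card * (Real.exp t - 1) * (m * k) / (2 * n)) := by
  have hn' : (0 : ℝ) < n := by exact_mod_cast hn
  have hs : (S.card : ℝ) ≤ 2 * n := by
    have := Finset.card_le_univ S
    simp at this
    have h2 : (S.card : ℝ) ≤ n * 2 := by exact_mod_cast this
    linarith
  have hp : 0 ≤ 2 * n + S.card * (Real.exp t - 1) := by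
    have := mul_nonneg (Nat.cast_nonneg (α := ℝ) S.card) (Real.exp_pos t).le
    nlinarith
  rw [mgf_eq, card_formula, ← div_pow, ← div_pow, ← pow_mul]
  have h1 : (2 * n + S.card * (Real.exp t - 1)) / (2 * n : ℝ)
      ≤ Real.exp (S.card * (Real.exp t - 1) / (2 * n)) := by
    refine le_trans (le_of_eq ?_) (Real.add_one_le_exp _)
    field_simp
    ring
  refine (pow_le_pow_left₀ (by positivity) h1 _).trans (le_of_eq ?_)
  rw [← Real.exp_nat_mul]
  congr 1
  push_cast
  ring

lemma choose_bound {n s : ℕ} (hn : 0 < n) (hs : 0 < s) :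
    ((2 * n).choose s : ℝ) ≤ Real.exp (s * (1 + Real.log 2 + Real.log (n / s))) := by
  have hn' : (0 : ℝ) < n := by exact_mod_cast hn
  have hs' : (0 : ℝ) < s := by exact_mod_cast hs
  have h1 : ((2 * n).choose s : ℝ) ≤ (2 * n : ℝ) ^ s / s.factorial := by
    have := Nat.choose_le_pow_div (α := ℝ) s (2 * n)
    push_cast at this
    exact this
  have h2 := Real.pow_div_factorial_le_exp (s : ℝ) hs'.le s
  have h3 : Real.exp (s * (1 + Real.log 2 + Real.log (n / s)))
      = Real.exp s * (2 * n / s : ℝ) ^ s := by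
    have : (2 * n / s : ℝ) = Real.exp (Real.log 2 + Real.log (n / s)) := by
      rw [Real.exp_add, Real.exp_log (by norm_num), Real.exp_log (by positivity)]
      ring
    rw [this, ← Real.exp_nat_mul, ← Real.exp_add]
    congr 1
    ring
  rw [h3]
  refine h1.trans ?_
  calc (2 * n : ℝ) ^ s / s.factorial = (s : ℝ) ^ s / s.factorial * (2 * n / s : ℝ) ^ s := by
        rw [div_pow]; field_simp
    _ ≤ _ := by gcongr

lemma prF_inst {n k m : ℕ} (E : Formula n k m → Prop) [inst : DecidablePred E] :
    prF n k m E = ((univ.filter fun Φ : Formula n k m => E Φ).card : ℝ) /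
      (Fintype.card (Formula n k m) : ℝ) := by
  unfold prF
  have : inst = fun a => propDecidable (E a) := Subsingleton.elim _ _
  subst this
  rfl

lemma union_bound {n k m : ℕ} (hn : 0 < n) (F : ℕ → Prop) (a : ℕ → ℝ) (t L : ℝ)
    (P : Formula n k m → Finset (Lit n) → Prop)
    (h : ∀ Φ S, P Φ S → 0 < S.card ∧ F S.card ∧ a S.card ≤ t * Vol n k m Φ S)
    (hb : ∀ s : ℕ, 0 < s → s ≤ 2 * n → F s →
      s * (1 + Real.log 2 + Real.log (n / s)) + s * (Real.exp t - 1) * (m * k) / (2 * n) - a s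
        ≤ -L) :
    prF n k m (fun Φ => ∃ S, P Φ S) ≤ (2 * n + 1) * Real.exp (-L) := by
  have hn' : (0 : ℝ) < n := by exact_mod_cast hn
  have hC : (0 : ℝ) < (Fintype.card (Formula n k m) : ℝ) := by
    rw [card_formula]; positivity
  set G : Finset (Finset (Lit n)) := univ.filter fun S => 0 < S.card ∧ F S.card with hG
  have hcount : ((univ.filter fun Φ : Formula n k m => ∃ S, P Φ S).card : ℝ)
      ≤ ∑ Φ : Formula n k m, ∑ S ∈ G, Real.exp (t * Vol n k m Φ S - a S.card) := by
    rw [Finset.card_filter]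
    push_cast
    refine Finset.sum_le_sum fun Φ _ => ?_
    split_ifs with hP
    · obtain ⟨S, hS⟩ := hP
      obtain ⟨h0, hF, ha⟩ := h Φ S hS
      have : (1 : ℝ) ≤ Real.exp (t * Vol n k m Φ S - a S.card) := by
        apply Real.one_le_exp; linarith
      refine this.trans ?_
      exact Finset.single_le_sum (f := fun S => Real.exp (t * Vol n k m Φ S - a S.card))
        (fun _ _ => (Real.exp_pos _).le) (by simp [hG, hF]; exact Finset.card_pos.mp h0)
    · exact Finset.sum_nonneg fun _ _ => (Real.exp_pos _).le
  have hS : ∀ S ∈ G, (∑ Φ : Formula n k m, Real.exp (t * Vol n k m Φ S - a S.card))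
      / (Fintype.card (Formula n k m) : ℝ)
      ≤ Real.exp (-L) / ((2 * n).choose S.card : ℝ) := by
    intro S hSG
    simp only [hG, Finset.mem_filter, Finset.mem_univ, true_and] at hSG
    have hcard : S.card ≤ 2 * n := by
      have := Finset.card_le_univ S
      simp at this
      omega
    have hch : (0 : ℝ) < ((2 * n).choose S.card : ℝ) := by
      exact_mod_cast Nat.choose_pos hcard
    rw [le_div_iff₀ hch]
    simp_rw [sub_eq_add_neg, Real.exp_add]
    rw [← Finset.sum_mul, mul_div_right_comm]
    have h1 := mgf_le (k := k) (m := m) hn S t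
    have h2 := choose_bound hn hSG.1
    have h3 := hb _ hSG.1 hcard hSG.2
    calc _ ≤ Real.exp (S.card * (Real.exp t - 1) * (m * k) / (2 * n)) * Real.exp (-a S.card)
          * Real.exp (S.card * (1 + Real.log 2 + Real.log (n / S.card))) := by gcongr
      _ ≤ _ := by
        rw [← Real.exp_add, ← Real.exp_add]
        apply Real.exp_le_exp.mpr
        linarith
  have hfin : ∑ S ∈ G, Real.exp (-L) / ((2 * n).choose S.card : ℝ)
      ≤ (2 * n + 1) * Real.exp (-L) := by
    calc _ ≤ ∑ S ∈ (univ : Finset (Lit n)).powerset,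
            Real.exp (-L) / ((2 * n).choose S.card : ℝ) := by
          apply Finset.sum_le_sum_of_subset_of_nonneg
          · intro S _; simp
          · intros; positivity
      _ = _ := by
          rw [Finset.sum_powerset_apply_card (fun s => Real.exp (-L) / ((2 * n).choose s : ℝ))]
          have hc : (univ : Finset (Lit n)).card = 2 * n := by simp [mul_comm]
          rw [hc]
          rw [Finset.sum_congr rfl (g := fun _ => Real.exp (-L))]
          · simp
          · intro s hs
            have : s ≤ 2 * n := by simp at hs; omega
            have hch : (0 : ℝ) < ((2 * n).choose s : ℝ) := by
              exact_mod_cast Nat.choose_pos this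
            rw [nsmul_eq_mul]
            field_simp
  rw [prF_inst]
  calc _ ≤ (∑ Φ : Formula n k m, ∑ S ∈ G, Real.exp (t * Vol n k m Φ S - a S.card))
        / (Fintype.card (Formula n k m) : ℝ) := by
        apply div_le_div_of_nonneg_right _ hC.le
        exact hcount
    _ = ∑ S ∈ G, (∑ Φ : Formula n k m, Real.exp (t * Vol n k m Φ S - a S.card))
        / (Fintype.card (Formula n k m) : ℝ) := by
        rw [Finset.sum_comm, Finset.sum_div]
    _ ≤ _ := (Finset.sum_le_sum hS).trans hfin

lemma prF_good {n k m : ℕ} (hn : 0 < n) (A B : Formula n k m → Finset (Lit n) → Prop) :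
    1 - prF n k m (fun Φ => ∃ S, ¬ A Φ S) - prF n k m (fun Φ => ∃ S, ¬ B Φ S)
      ≤ prF n k m (fun Φ => (∀ S, A Φ S) ∧ (∀ S, B Φ S)) := by
  have hn' : (0 : ℝ) < n := by exact_mod_cast hn
  have hC : (0 : ℝ) < (Fintype.card (Formula n k m) : ℝ) := by
    rw [card_formula]; positivity
  rw [prF_inst, prF_inst, prF_inst]
  rw [sub_sub, ← add_div, sub_le_iff_le_add, ← add_div, le_div_iff₀ hC, one_mul]
  have h : (univ : Finset (Formula n k m)) ⊆
      (univ.filter fun Φ => (∀ S, A Φ S) ∧ (∀ S, B Φ S)) ∪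
      ((univ.filter fun Φ => ∃ S, ¬ A Φ S) ∪ (univ.filter fun Φ => ∃ S, ¬ B Φ S)) := by
    intro Φ _
    simp only [Finset.mem_union, Finset.mem_filter, Finset.mem_univ, true_and]
    by_cases hA : ∀ S, A Φ S
    · by_cases hB : ∀ S, B Φ S
      · exact Or.inl ⟨hA, hB⟩
      · push Not at hB; exact Or.inr (Or.inr hB)
    · push Not at hA; exact Or.inr (Or.inl hA)
  have h2 := (Finset.card_le_card h).trans
    ((Finset.card_union_le _ _).trans (Nat.add_le_add_left (Finset.card_union_le _ _) _))
  rw [Finset.card_univ] at h2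
  have h3 := (Nat.cast_le (α := ℝ)).mpr h2
  rw [Nat.cast_add, Nat.cast_add] at h3
  exact h3

lemma exp_half : Real.exp (-(1 / 2)) ≤ 0.607 := by
  have h1 : Real.exp (-(1 / 2)) * Real.exp (-(1 / 2)) = Real.exp (-1) := by
    rw [← Real.exp_add]; norm_num
  have h2 := Real.exp_neg_one_lt_d9
  have h3 := Real.exp_pos (-(1 / 2))
  by_contra hcon
  push Not at hcon
  nlinarith

lemma upper {n k m : ℕ} (hn : 0 < n) (r : ℝ) (hr : 1 ≤ r) (hk : 10 ≤ k)
    (hm : (m : ℝ) ≤ r * n) :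
    prF n k m (fun Φ => ∃ S : Finset (Lit n), ¬ ((Vol n k m Φ S : ℝ) ≤
                10 * (S.card : ℝ) * max ((k : ℝ) * r) (Real.log ((n : ℝ) / (S.card : ℝ)))))
      ≤ (2 * n + 1) * Real.exp (-(2 * Real.log n)) := by
  have hn' : (0 : ℝ) < n := by exact_mod_cast hn
  have hk' : (10 : ℝ) ≤ k := by exact_mod_cast hk
  refine union_bound hn (fun _ => True)
    (fun s => 10 * (s : ℝ) * max ((k : ℝ) * r) (Real.log ((n : ℝ) / (s : ℝ)))) 1 _ _ ?_ ?_
  · intro Φ S hP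
    refine ⟨?_, trivial, ?_⟩
    · rcases Nat.eq_zero_or_pos S.card with h0 | h0
      · exfalso
        apply hP
        have : S = ∅ := Finset.card_eq_zero.mp h0
        subst this
        simp [Vol]
      · exact h0
    · push Not at hP
      rw [one_mul]; exact hP.le
  · intro s hs hs2 _
    have hs' : (1 : ℝ) ≤ s := by exact_mod_cast hs
    set M := max ((k : ℝ) * r) (Real.log ((n : ℝ) / (s : ℝ))) with hM
    have hM1 : (k : ℝ) * r ≤ M := le_max_left _ _
    have hM2 : Real.log ((n : ℝ) / (s : ℝ)) ≤ M := le_max_right _ _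
    have hM3 : 10 ≤ M := by nlinarith
    have hl2 := Real.log_two_lt_d9
    have he := Real.exp_one_lt_d9
    have he0 : 0 ≤ Real.exp 1 - 1 := by linarith [Real.exp_one_gt_d9]
    have h1 : s * (Real.exp 1 - 1) * (m * k) / (2 * n) ≤ s * M := by
      rw [div_le_iff₀ (by positivity)]
      have a1 : (m : ℝ) * k ≤ M * n := by
        calc (m : ℝ) * k ≤ r * n * k := by gcongr
          _ = k * r * n := by ring
          _ ≤ M * n := by gcongr
      have a2 : (Real.exp 1 - 1) * (m * k) ≤ 2 * (M * n) :=
        mul_le_mul (by linarith) a1 (by positivity) (by norm_num)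
      nlinarith
    have h2 : s * (1 + Real.log 2 + Real.log (n / s)) ≤ s * (M + M) := by
      gcongr
      linarith
    have h3 : Real.log n ≤ 2 * (s * M) := by
      have : Real.log n = Real.log (n / s) + Real.log s := by
        rw [← Real.log_mul (by positivity) (by positivity)]
        congr 1; field_simp
      have h4 := Real.log_le_sub_one_of_pos (show (0 : ℝ) < s by linarith)
      nlinarith
    nlinarith

lemma lower {n k m : ℕ} (hn : 0 < n) (r : ℝ) (hr : 600 ≤ r) (hk : 10 ≤ k)
    (hm : r * n - 1 ≤ (m : ℝ)) :
    prF n k m (fun Φ => ∃ S : Finset (Lit n), ¬ ((n : ℝ) * (2 : ℝ) ^ (-(0.8 : ℝ) * k) ≤ (S.card : ℝ) →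
              (1 / 3 : ℝ) * (S.card : ℝ) * (k : ℝ) * r ≤ (Vol n k m Φ S : ℝ)))
      ≤ (2 * n + 1) * Real.exp (-((2 : ℝ) ^ (-(0.8 : ℝ) * k) * n)) := by
  have hn' : (0 : ℝ) < n := by exact_mod_cast hn
  have hn1 : (1 : ℝ) ≤ n := by exact_mod_cast hn
  have hk' : (10 : ℝ) ≤ k := by exact_mod_cast hk
  have hc : (0 : ℝ) < (2 : ℝ) ^ (-(0.8 : ℝ) * k) := by positivity
  refine union_bound hn (fun s => (n : ℝ) * (2 : ℝ) ^ (-(0.8 : ℝ) * k) ≤ s)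
    (fun s => -(1 / 2) * ((1 / 3 : ℝ) * (s : ℝ) * (k : ℝ) * r)) (-(1 / 2)) _ _ ?_ ?_
  · intro Φ S hP
    push Not at hP
    refine ⟨?_, hP.1, ?_⟩
    · have : (0 : ℝ) < S.card := lt_of_lt_of_le (by positivity) hP.1
      exact_mod_cast this
    · linarith [hP.2]
  · intro s hs hs2 hF
    have hs' : (1 : ℝ) ≤ s := by exact_mod_cast hs
    have hl2 := Real.log_two_lt_d9
    have hl2' := Real.log_two_gt_d9
    have hlog : Real.log (n / s) ≤ 0.8 * k * Real.log 2 := by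
      have h1 : (n : ℝ) / s ≤ (2 : ℝ) ^ ((0.8 : ℝ) * k) := by
        rw [div_le_iff₀ (by linarith)]
        rw [show -(0.8 : ℝ) * k = -(0.8 * k) by ring, Real.rpow_neg (by norm_num)] at hF
        have : (0 : ℝ) < (2 : ℝ) ^ ((0.8 : ℝ) * k) := by positivity
        rw [← div_eq_mul_inv, div_le_iff₀ this] at hF
        linarith
      have h2 := Real.log_le_log (by positivity) h1
      rwa [Real.log_rpow (by norm_num)] at h2
    have he := exp_half
    have h1 : s * (Real.exp (-(1 / 2)) - 1) * (m * k) / (2 * n) ≤ -(s * (0.393 / 2 * (k * (r - 1)))) := by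
      rw [div_le_iff₀ (by positivity)]
      have a1 : n * (k * (r - 1)) ≤ (m : ℝ) * k := by
        have : n * (r - 1) ≤ (m : ℝ) := by nlinarith
        nlinarith
      have a0 : 0 ≤ n * (k * (r - 1)) := by
        have : 0 ≤ r - 1 := by linarith
        positivity
      have a2 : 0.393 * (n * (k * (r - 1))) ≤ (1 - Real.exp (-(1 / 2))) * (m * k) :=
        mul_le_mul (by linarith) a1 a0 (by linarith)
      have a3 := mul_le_mul_of_nonneg_left a2 (show (0 : ℝ) ≤ s by linarith)
      linarith
    have hkr : 600 * (k : ℝ) ≤ k * r := by nlinarith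
    have hkl : (k : ℝ) * Real.log 2 ≤ k * 0.7 := by gcongr; linarith
    have key : (1 + Real.log 2 + Real.log (n / s)) - 0.393 / 2 * (k * (r - 1))
        + 1 / 6 * (k * r) ≤ -1 := by
      nlinarith
    have := mul_le_mul_of_nonneg_left key (show (0 : ℝ) ≤ s by linarith)
    nlinarith

/-- For `k ≥ k0` and `r = 2^k ln 2 - ρ` with `0 < ρ ≤ 2`, whp the degree
sequence satisfies: `Vol(S) ≤ 10 |S| max{k r, ln(n/|S|)}` for every set `S` of literals,
and `Vol(S) ≥ (1/3) |S| k r` for every `S` with `|S| ≥ n 2^{-0.8 k}`. -/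
theorem statement10 :
    ∃ k0 : ℕ, ∀ k : ℕ, k0 ≤ k → ∀ rho : ℝ, 0 < rho → rho ≤ 2 →
      Tendsto
        (fun n : ℕ =>
          let r := 2 ^ k * Real.log 2 - rho
          let m := ⌊r * (n : ℝ)⌋₊
          prF n k m fun Φ =>
            (∀ S : Finset (Lit n),
              (Vol n k m Φ S : ℝ) ≤
                10 * (S.card : ℝ) * max ((k : ℝ) * r) (Real.log ((n : ℝ) / (S.card : ℝ)))) ∧
            (∀ S : Finset (Lit n), (n : ℝ) * (2 : ℝ) ^ (-(0.8 : ℝ) * k) ≤ (S.card : ℝ) →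
              (1 / 3 : ℝ) * (S.card : ℝ) * (k : ℝ) * r ≤ (Vol n k m Φ S : ℝ)))
        atTop (nhds 1) := by
  refine ⟨10, fun k hk rho h0 h2 => ?_⟩
  have hr : (600 : ℝ) ≤ 2 ^ k * Real.log 2 - rho := by
    have h1 : (2 : ℝ) ^ 10 ≤ 2 ^ k := pow_le_pow_right₀ (by norm_num) hk
    have := Real.log_two_gt_d9
    nlinarith
  set r : ℝ := 2 ^ k * Real.log 2 - rho with hrdef
  set c : ℝ := (2 : ℝ) ^ (-(0.8 : ℝ) * k) with hc
  have hcpos : 0 < c := by positivity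
  have hlim : Tendsto (fun n : ℕ => 1 - (2 * (n : ℝ) + 1) * Real.exp (-(2 * Real.log n))
      - (2 * (n : ℝ) + 1) * Real.exp (-(c * n))) atTop (nhds 1) := by
    have t1 : Tendsto (fun n : ℕ => (2 * (n : ℝ) + 1) * Real.exp (-(2 * Real.log n)))
        atTop (nhds 0) := by
      have e : Tendsto (fun n : ℕ => 2 * ((n : ℝ))⁻¹ + (n : ℝ)⁻¹ * (n : ℝ)⁻¹) atTop (nhds 0) := by
        have i := tendsto_inv_atTop_nhds_zero_nat (𝕜 := ℝ)
        simpa using (i.const_mul 2).add (i.mul i)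
      refine e.congr' ?_
      filter_upwards [eventually_gt_atTop 0] with n hn
      have hn' : (0 : ℝ) < n := by exact_mod_cast hn
      rw [Real.exp_neg, two_mul (Real.log n), Real.exp_add, Real.exp_log hn']
      field_simp
    have t2 : Tendsto (fun n : ℕ => (2 * (n : ℝ) + 1) * Real.exp (-(c * n)))
        atTop (nhds 0) := by
      have g1 : Tendsto (fun n : ℕ => c * (n : ℝ)) atTop atTop :=
        tendsto_natCast_atTop_atTop.const_mul_atTop hcpos
      have p1 := (Real.tendsto_pow_mul_exp_neg_atTop_nhds_zero 1).comp g1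
      have p0 := (Real.tendsto_pow_mul_exp_neg_atTop_nhds_zero 0).comp g1
      have := (p1.const_mul (2 / c)).add p0
      simp only [mul_zero, add_zero] at this
      refine this.congr ?_
      intro n
      simp only [Function.comp]
      field_simp
    simpa using (tendsto_const_nhds (x := (1 : ℝ))).sub t1 |>.sub t2
  refine tendsto_of_tendsto_of_tendsto_of_le_of_le' hlim tendsto_const_nhds ?_ ?_
  · filter_upwards [eventually_gt_atTop 0] with n hn
    have hn' : (0 : ℝ) < n := by exact_mod_cast hn
    have m1 : (⌊r * (n : ℝ)⌋₊ : ℝ) ≤ r * n := Nat.floor_le (by nlinarith)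
    have m2 : r * n - 1 ≤ (⌊r * (n : ℝ)⌋₊ : ℝ) := (Nat.sub_one_lt_floor _).le
    have u := upper (k := k) hn r (by linarith) hk m1
    have l := lower (k := k) hn r hr hk m2
    refine le_trans ?_ (prF_good hn
      (fun Φ S => (Vol n k ⌊r * (n : ℝ)⌋₊ Φ S : ℝ) ≤
        10 * (S.card : ℝ) * max ((k : ℝ) * r) (Real.log ((n : ℝ) / (S.card : ℝ))))
      (fun Φ S => (n : ℝ) * c ≤ (S.card : ℝ) →
        (1 / 3 : ℝ) * (S.card : ℝ) * (k : ℝ) * r ≤ (Vol n k ⌊r * (n : ℝ)⌋₊ Φ S : ℝ)))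
    exact le_trans le_rfl (sub_le_sub (sub_le_sub_left u 1) l)
  · exact Eventually.of_forall fun n => prF_le_one _ _ _ _
end
end

section
/- There exist an integer k0 and constants C, c > 0 such that for every k >= k0 and every vector ell = (ell_1,...,ell_k) in (0,1)^k with |ell_j - 1/2| <= 10 * sqrt(k * ln k) * 2^{-k/2} for all j, there exists a vector q = (q_1,...,q_k) in (0,1)^k satisfying q_j / (1 - prod_{l=1}^k (1 - q_l)) = ell_j for every j in {1,...,k}, and moreover |q_j - (ell_j - 2^{-k-1})| <= C * k^c * 2^{-3k/2} for every j. -/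
theorem aux_core (k : ℕ) (r : ℝ) (hr : 0 < r) (hk : 1 ≤ k) (hr2 : r ^ 2 = (1 / 2 : ℝ) ^ k)
    (hsmall : 60 * (k : ℝ) ^ 2 * r ≤ 1) (ℓ : Fin k → ℝ) (h01 : ∀ j, 0 < ℓ j ∧ ℓ j < 1)
    (hl : ∀ j, |ℓ j - 1 / 2| ≤ 10 * k * r) :
    ∃ t : ℝ, 0 ≤ t ∧ t < 1 ∧ ∏ l, (1 - (1 - t) * ℓ l) = t ∧ |t - r ^ 2| ≤ 60 * k ^ 2 * r ^ 3 := by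
  have hk1 : (1 : ℝ) ≤ k := by exact_mod_cast hk
  have hr60 : 60 * r ≤ 1 := by
    have : r ≤ (k : ℝ) ^ 2 * r := le_mul_of_one_le_left hr.le (one_le_pow₀ hk1)
    linarith
  have hkr : r ≤ k * r := le_mul_of_one_le_left hr.le hk1
  have key : ∀ t : ℝ, 0 ≤ t → t ≤ 2 * r ^ 2 →
      |∏ l, (1 - (1 - t) * ℓ l) - r ^ 2| ≤ 60 * k ^ 2 * r ^ 3 := by
    intro t ht0 ht
    have e : ∏ l, (1 - (1 - t) * ℓ l) = r ^ 2 * ∏ l, (1 + (1 - 2 * (1 - t) * ℓ l)) := by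
      have : r ^ 2 = ∏ _l : Fin k, (1 / 2 : ℝ) := by simp [hr2]
      rw [this, ← Finset.prod_mul_distrib]
      refine Finset.prod_congr rfl fun l _ => by ring
    have hx : ∀ l, ‖1 - 2 * (1 - t) * ℓ l‖ ≤ 30 * k * r := by
      intro l
      have h1 := abs_le.1 (hl l)
      obtain ⟨h2, h3⟩ := h01 l
      have h4 : t * ℓ l ≤ t := mul_le_of_le_one_right ht0 h3.le
      have h5 : 0 ≤ t * ℓ l := mul_nonneg ht0 h2.le
      have h6 : r ^ 2 ≤ r := by nlinarith
      rw [Real.norm_eq_abs, abs_le]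
      constructor <;> nlinarith
    have hs : ∑ l, ‖1 - 2 * (1 - t) * ℓ l‖ ≤ 30 * k ^ 2 * r := by
      calc _ ≤ ∑ _l : Fin k, 30 * k * r := Finset.sum_le_sum fun l _ => hx l
        _ = _ := by simp; ring
    have hp := Finset.norm_prod_one_add_sub_one_le Finset.univ (fun l => 1 - 2 * (1 - t) * ℓ l)
    have h0 : 0 ≤ 30 * (k : ℝ) ^ 2 * r := by positivity
    have he := Real.abs_exp_sub_one_le (x := 30 * (k : ℝ) ^ 2 * r)
      (by rw [abs_of_nonneg h0]; linarith)
    rw [abs_of_nonneg h0] at he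
    have he2 := le_of_abs_le he
    have hmono := Real.exp_le_exp.2 hs
    rw [e, show r ^ 2 * ∏ l, (1 + (1 - 2 * (1 - t) * ℓ l)) - r ^ 2
      = r ^ 2 * (∏ l, (1 + (1 - 2 * (1 - t) * ℓ l)) - 1) by ring, abs_mul,
      abs_of_nonneg (sq_nonneg r)]
    rw [Real.norm_eq_abs] at hp
    calc _ ≤ r ^ 2 * (2 * (30 * (k : ℝ) ^ 2 * r)) :=
          mul_le_mul_of_nonneg_left (by linarith) (sq_nonneg r)
      _ = _ := by ring
  have hb : 60 * (k : ℝ) ^ 2 * r ^ 3 ≤ r ^ 2 := by nlinarith [sq_nonneg r]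
  have hT : (0 : ℝ) ≤ 2 * r ^ 2 := by positivity
  have hcont : ContinuousOn (fun t : ℝ => t - ∏ l, (1 - (1 - t) * ℓ l))
      (Set.Icc 0 (2 * r ^ 2)) := by fun_prop
  have hiv := intermediate_value_Icc hT hcont
  have hA := abs_le.1 (key 0 le_rfl hT)
  have hB := abs_le.1 (key _ hT le_rfl)
  obtain ⟨t, ⟨ht0, ht1⟩, ht⟩ := hiv (show (0 : ℝ) ∈ _ from ⟨by linarith, by linarith⟩)
  have hfix : ∏ l, (1 - (1 - t) * ℓ l) = t := by
    simp only at ht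
    linarith
  refine ⟨t, ht0, by nlinarith, hfix, ?_⟩
  have := key t ht0 ht1
  rwa [hfix] at this

theorem aux_small : ∃ k0 : ℕ, ∀ k : ℕ, k0 ≤ k →
    60 * (k : ℝ) ^ 2 * (2 : ℝ) ^ (-(k : ℝ) / 2) ≤ 1 := by
  have h := tendsto_pow_const_mul_const_pow_of_abs_lt_one 2 (r := (2 : ℝ) ^ (-(1 : ℝ) / 2)) (by
    rw [abs_of_pos (by positivity)]
    exact Real.rpow_lt_one_of_one_lt_of_neg (by norm_num) (by norm_num))
  have h2 := h.eventually (gt_mem_nhds (show (0 : ℝ) < 1 / 60 by norm_num))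
  obtain ⟨k0, hk0⟩ := Filter.eventually_atTop.1 h2
  refine ⟨k0, fun k hk => ?_⟩
  have h3 := hk0 k hk
  rw [← Real.rpow_mul_natCast (by norm_num), show -(1 : ℝ) / 2 * k = -(k : ℝ) / 2 by ring] at h3
  linarith

/-- For every large `k` and every `ℓ ∈ (0,1)^k` with
`|ℓ_j - 1/2| ≤ 10 √(k ln k) 2^{-k/2}`, there is `q ∈ (0,1)^k` with
`q_j / (1 - ∏ (1 - q_l)) = ℓ_j` for all `j`, and
`|q_j - (ℓ_j - 2^{-k-1})| ≤ C k^c 2^{-3k/2}`. -/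
theorem statement13 :
    ∃ (k0 : ℕ) (C c : ℝ), 0 < C ∧ 0 < c ∧
      ∀ k : ℕ, k0 ≤ k →
        ∀ ℓ : Fin k → ℝ, (∀ j, 0 < ℓ j ∧ ℓ j < 1) →
          (∀ j, |ℓ j - 1 / 2| ≤
            10 * Real.sqrt ((k : ℝ) * Real.log k) * (2 : ℝ) ^ (-(k : ℝ) / 2)) →
          ∃ q : Fin k → ℝ, (∀ j, 0 < q j ∧ q j < 1) ∧
            (∀ j, q j / (1 - ∏ l, (1 - q l)) = ℓ j) ∧
            ∀ j, |q j - (ℓ j - (2 : ℝ) ^ (-(k : ℤ) - 1))| ≤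
              C * (k : ℝ) ^ c * (2 : ℝ) ^ (-(3 * (k : ℝ)) / 2) := by
  obtain ⟨k0, hk0⟩ := aux_small
  refine ⟨max k0 1, 70, 2, by norm_num, by norm_num, fun k hk ℓ h01 hl => ?_⟩
  have hk1 : 1 ≤ k := le_trans (le_max_right _ _) hk
  have hk1' : (1 : ℝ) ≤ k := by exact_mod_cast hk1
  have hs := hk0 k (le_trans (le_max_left _ _) hk)
  have hr3 : (2 : ℝ) ^ (-(3 * (k : ℝ)) / 2) = ((2 : ℝ) ^ (-(k : ℝ) / 2)) ^ 3 := by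
    rw [← Real.rpow_mul_natCast (by norm_num)]
    congr 1; push_cast; ring
  have hr2 : ((2 : ℝ) ^ (-(k : ℝ) / 2)) ^ 2 = (1 / 2 : ℝ) ^ k := by
    rw [← Real.rpow_mul_natCast (by norm_num),
      show -(k : ℝ) / 2 * (2 : ℕ) = -(k : ℝ) by push_cast; ring, Real.rpow_neg (by norm_num),
      Real.rpow_natCast]
    simp
  have hz : (2 : ℝ) ^ (-(k : ℤ) - 1) = ((2 : ℝ) ^ (-(k : ℝ) / 2)) ^ 2 / 2 := by
    rw [hr2, zpow_sub₀ (by norm_num), zpow_neg]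
    simp
  have hr : 0 < (2 : ℝ) ^ (-(k : ℝ) / 2) := by positivity
  rw [hr3, hz]
  generalize (2 : ℝ) ^ (-(k : ℝ) / 2) = r at *
  have hsq : Real.sqrt ((k : ℝ) * Real.log k) ≤ k := by
    rw [Real.sqrt_le_left (by positivity), sq]
    exact mul_le_mul_of_nonneg_left (Real.log_le_self (by positivity)) (by positivity)
  have hl' : ∀ j, |ℓ j - 1 / 2| ≤ 10 * k * r := fun j => (hl j).trans (by gcongr)
  obtain ⟨t, ht0, ht1, hfix, ht⟩ := aux_core k r hr hk1 hr2 hs ℓ h01 hl'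
  refine ⟨fun j => (1 - t) * ℓ j, fun j => ?_, fun j => ?_, fun j => ?_⟩
  · obtain ⟨h2, h3⟩ := h01 j
    exact ⟨mul_pos (by linarith) h2, by nlinarith⟩
  · simp only [hfix]
    rw [mul_div_cancel_left₀ _ (by linarith)]
  · obtain ⟨h2, h3⟩ := h01 j
    have e : (1 - t) * ℓ j - (ℓ j - r ^ 2 / 2) = -((t - r ^ 2) * ℓ j) - r ^ 2 * (ℓ j - 1 / 2) := by
      ring
    rw [Real.rpow_two]
    simp only [e]
    have a1 : |(t - r ^ 2) * ℓ j| ≤ 60 * k ^ 2 * r ^ 3 := by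
      rw [abs_mul, abs_of_pos h2]
      exact (mul_le_of_le_one_right (abs_nonneg _) h3.le).trans ht
    have a2 : |r ^ 2 * (ℓ j - 1 / 2)| ≤ 10 * k ^ 2 * r ^ 3 := by
      rw [abs_mul, abs_of_nonneg (sq_nonneg r)]
      calc _ ≤ r ^ 2 * (10 * k * r) := mul_le_mul_of_nonneg_left (hl' j) (sq_nonneg r)
        _ = 10 * k * r ^ 3 := by ring
        _ ≤ _ := by
          gcongr
          nlinarith
    have := abs_sub (-((t - r ^ 2) * ℓ j)) (r ^ 2 * (ℓ j - 1 / 2))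
    rw [abs_neg] at this
    linarith
end

section
/- There exist an integer k0 and constants C, c > 0 such that for every k >= k0 the following holds. Let psi(y_1, y_2) = -y_2 * ln(y_2/y_1) - (1 - y_2) * ln((1-y_2)/(1-y_1)) and let Y = {(y_1,y_2) in (0,1)^2 : |y_1 - y_2| <= k^3 * 2^{-k} and |y_i - 1/4| <= 1/k^2 for i = 1,2}. Then both the function (y_1,y_2) -> psi(y_1,y_2) and the function (y_1,y_2) -> (1 - y_2) * psi(y_1,y_2) are (C * k^c * 2^{-k})-tame on Y. -/
noncomputable section

/-- First partial derivative of `g` in coordinate `i`. -/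
def pd1 {k : ℕ} (g : (Fin k → ℝ) → ℝ) (i : Fin k) (z : Fin k → ℝ) : ℝ :=
  fderiv ℝ g z (Pi.single i 1)

/-- Second partial derivative of `g` in coordinates `i`, `j`. -/
def pd2 {k : ℕ} (g : (Fin k → ℝ) → ℝ) (i j : Fin k) (z : Fin k → ℝ) : ℝ :=
  fderiv ℝ (fun w => fderiv ℝ g w (Pi.single i 1)) z (Pi.single j 1)

/-- The open box `(0,1)^k`. -/
def box (k : ℕ) : Set (Fin k → ℝ) := {z | ∀ i, z i ∈ Set.Ioo (0 : ℝ) 1}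

/-- `Ψ` is `ε`-tame on `Y`: (T1) `Ψ(y,y) = 0` on the diagonal of `(0,1)²`;
(T2) `|∑_i ∂²Ψ/∂z_i∂z_j| ≤ ε` on `Y` for each `j`; (T3) `|∑_{i,j} ∂²Ψ/∂z_i∂z_j| ≤ ε²`
on `Y`; (T4) `|∂²Ψ/∂z_i∂z_j| ≤ 100` on `Y` for all `i, j`. -/
def IsTame (eps : ℝ) (Ψ : (Fin 2 → ℝ) → ℝ) (Y : Set (Fin 2 → ℝ)) : Prop :=
  (∀ y : ℝ, y ∈ Set.Ioo (0 : ℝ) 1 → Ψ (fun _ => y) = 0) ∧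
  (∀ z ∈ Y, ∀ j : Fin 2, |∑ i : Fin 2, pd2 Ψ i j z| ≤ eps) ∧
  (∀ z ∈ Y, |∑ i : Fin 2, ∑ j : Fin 2, pd2 Ψ i j z| ≤ eps ^ 2) ∧
  (∀ z ∈ Y, ∀ i j : Fin 2, |pd2 Ψ i j z| ≤ 100)

/-- The rate function `ψ(y₁, y₂) = -y₂ ln(y₂/y₁) - (1 - y₂) ln((1-y₂)/(1-y₁))`,
as a function of `z : Fin 2 → ℝ` with `y₁ = z 0`, `y₂ = z 1`. -/
def psiFun : (Fin 2 → ℝ) → ℝ := fun z =>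
  -(z 1) * Real.log (z 1 / z 0) - (1 - z 1) * Real.log ((1 - z 1) / (1 - z 0))

/-- `Y = {(y₁,y₂) ∈ (0,1)² : |y₁ - y₂| ≤ k³ 2^{-k}, |y_i - 1/4| ≤ 1/k²}`. -/
def Yset (k : ℕ) : Set (Fin 2 → ℝ) :=
  {z | (∀ i, z i ∈ Set.Ioo (0 : ℝ) 1) ∧
    |z 0 - z 1| ≤ (k : ℝ) ^ 3 * ((2 : ℝ) ^ k)⁻¹ ∧
    |z 0 - 1 / 4| ≤ 1 / (k : ℝ) ^ 2 ∧ |z 1 - 1 / 4| ≤ 1 / (k : ℝ) ^ 2}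

/-- The covector `a dz₀ + b dz₁`. -/
def cov (a b : ℝ) : (Fin 2 → ℝ) →L[ℝ] ℝ :=
  a • ContinuousLinearMap.proj (R := ℝ) (φ := fun _ : Fin 2 => ℝ) 0 +
    b • ContinuousLinearMap.proj (R := ℝ) (φ := fun _ : Fin 2 => ℝ) 1

lemma cov_apply (a b : ℝ) (v : Fin 2 → ℝ) : cov a b v = a * v 0 + b * v 1 := by
  simp [cov]

lemma hasF0 (z : Fin 2 → ℝ) : HasFDerivAt (fun w : Fin 2 → ℝ => w 0) (cov 1 0) z := by
  have h := hasFDerivAt_apply (𝕜 := ℝ) (F' := fun _ : Fin 2 => ℝ) 0 z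
  refine HasFDerivAt.congr_fderiv h ?_
  ext v
  simp [cov_apply]

lemma hasF1 (z : Fin 2 → ℝ) : HasFDerivAt (fun w : Fin 2 → ℝ => w 1) (cov 0 1) z := by
  have h := hasFDerivAt_apply (𝕜 := ℝ) (F' := fun _ : Fin 2 => ℝ) 1 z
  refine HasFDerivAt.congr_fderiv h ?_
  ext v
  simp [cov_apply]

lemma hasF_comp0 {f : ℝ → ℝ} {f' : ℝ} (z : Fin 2 → ℝ) (h : HasDerivAt f f' (z 0)) :
    HasFDerivAt (fun w : Fin 2 → ℝ => f (w 0)) (cov f' 0) z := by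
  have h2 := HasDerivAt.comp_hasFDerivAt (f := fun w : Fin 2 → ℝ => w 0) z h (hasF0 z)
  refine HasFDerivAt.congr_fderiv h2 ?_
  ext v
  simp [cov_apply]

lemma hasF_comp1 {f : ℝ → ℝ} {f' : ℝ} (z : Fin 2 → ℝ) (h : HasDerivAt f f' (z 1)) :
    HasFDerivAt (fun w : Fin 2 → ℝ => f (w 1)) (cov 0 f') z := by
  have h2 := HasDerivAt.comp_hasFDerivAt (f := fun w : Fin 2 → ℝ => w 1) z h (hasF1 z)
  refine HasFDerivAt.congr_fderiv h2 ?_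
  ext v
  simp [cov_apply]

lemma cov_mul {f g : (Fin 2 → ℝ) → ℝ} {a b c d : ℝ} {z : Fin 2 → ℝ}
    (hf : HasFDerivAt f (cov a b) z) (hg : HasFDerivAt g (cov c d) z) :
    HasFDerivAt (fun w => f w * g w) (cov (f z * c + g z * a) (f z * d + g z * b)) z := by
  have h := hf.mul hg
  refine HasFDerivAt.congr_fderiv h ?_
  ext v
  simp [cov_apply]
  ring

lemma cov_add {f g : (Fin 2 → ℝ) → ℝ} {a b c d : ℝ} {z : Fin 2 → ℝ}
    (hf : HasFDerivAt f (cov a b) z) (hg : HasFDerivAt g (cov c d) z) :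
    HasFDerivAt (fun w => f w + g w) (cov (a + c) (b + d)) z := by
  have h := hf.add hg
  refine HasFDerivAt.congr_fderiv h ?_
  ext v
  simp [cov_apply]
  ring

lemma cov_sub {f g : (Fin 2 → ℝ) → ℝ} {a b c d : ℝ} {z : Fin 2 → ℝ}
    (hf : HasFDerivAt f (cov a b) z) (hg : HasFDerivAt g (cov c d) z) :
    HasFDerivAt (fun w => f w - g w) (cov (a - c) (b - d)) z := by
  have h := hf.sub hg
  refine HasFDerivAt.congr_fderiv h ?_
  ext v
  simp [cov_apply]
  ring

lemma box_open : IsOpen (box 2) := by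
  have : box 2 = ⋂ i : Fin 2, (fun w : Fin 2 → ℝ => w i) ⁻¹' Set.Ioo (0 : ℝ) 1 := by
    ext w
    simp [box]
  rw [this]
  exact isOpen_iInter_of_finite fun i => isOpen_Ioo.preimage (continuous_apply i)

lemma pd2_of {g a b : (Fin 2 → ℝ) → ℝ}
    (hg : ∀ w ∈ box 2, HasFDerivAt g (cov (a w) (b w)) w) {z : Fin 2 → ℝ} (hz : z ∈ box 2)
    {a0 a1 b0 b1 : ℝ} (ha : HasFDerivAt a (cov a0 a1) z) (hb : HasFDerivAt b (cov b0 b1) z) :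
    pd2 g 0 0 z = a0 ∧ pd2 g 0 1 z = a1 ∧ pd2 g 1 0 z = b0 ∧ pd2 g 1 1 z = b1 := by
  have e0 : (fun w => fderiv ℝ g w (Pi.single 0 1)) =ᶠ[nhds z] a := by
    filter_upwards [box_open.mem_nhds hz] with w hw
    rw [(hg w hw).fderiv]
    simp [cov_apply]
  have e1 : (fun w => fderiv ℝ g w (Pi.single 1 1)) =ᶠ[nhds z] b := by
    filter_upwards [box_open.mem_nhds hz] with w hw
    rw [(hg w hw).fderiv]
    simp [cov_apply]
  unfold pd2
  rw [e0.fderiv_eq, e1.fderiv_eq, ha.fderiv, hb.fderiv]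
  simp [cov_apply]

/-- `∂ψ/∂y₁`. -/
def psiX (w : Fin 2 → ℝ) : ℝ := w 1 * (w 0)⁻¹ - (1 - w 1) * (1 - w 0)⁻¹

/-- `∂ψ/∂y₂`. -/
def psiY (w : Fin 2 → ℝ) : ℝ :=
  (Real.log (w 0) - Real.log (w 1)) - (Real.log (1 - w 0) - Real.log (1 - w 1))

lemma dlog1 {x : ℝ} (hx : 1 - x ≠ 0) :
    HasDerivAt (fun t : ℝ => Real.log (1 - t)) (-(1 - x)⁻¹) x := by
  have h := ((hasDerivAt_id x).const_sub 1).log hx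
  refine HasDerivAt.congr_deriv h ?_
  simp [neg_div]

lemma dinv1 {x : ℝ} (hx : 1 - x ≠ 0) :
    HasDerivAt (fun t : ℝ => (1 - t)⁻¹) ((1 - x)⁻¹ ^ 2) x := by
  have h := ((hasDerivAt_id x).const_sub 1).inv hx
  refine HasDerivAt.congr_deriv h ?_
  simp

lemma dinv {x : ℝ} (hx : x ≠ 0) :
    HasDerivAt (fun t : ℝ => t⁻¹) (-(x⁻¹ ^ 2)) x := by
  have h := hasDerivAt_inv hx
  refine HasDerivAt.congr_deriv h ?_
  simp

lemma hasF1m (z : Fin 2 → ℝ) : HasFDerivAt (fun w : Fin 2 → ℝ => 1 - w 1) (cov 0 (-1)) z :=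
  hasF_comp1 (f := fun t => 1 - t) z ((hasDerivAt_id (z 1)).const_sub 1)

lemma psi_hasF (w : Fin 2 → ℝ) (hw : w ∈ box 2) :
    HasFDerivAt psiFun (cov (psiX w) (psiY w)) w := by
  have h0 : w 0 ≠ 0 := (hw 0).1.ne'
  have h1 : w 1 ≠ 0 := (hw 1).1.ne'
  have h2 : 1 - w 0 ≠ 0 := (sub_pos.2 (hw 0).2).ne'
  have h3 : 1 - w 1 ≠ 0 := (sub_pos.2 (hw 1).2).ne'
  have A := cov_mul (hasF1 w)
    (cov_sub (hasF_comp0 w (Real.hasDerivAt_log h0)) (hasF_comp1 w (Real.hasDerivAt_log h1)))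
  have B := cov_mul (hasF1m w)
    (cov_sub (hasF_comp0 w (dlog1 h2)) (hasF_comp1 w (dlog1 h3)))
  have H := cov_add A B
  have e : psiFun =ᶠ[nhds w] (fun w => w 1 * (Real.log (w 0) - Real.log (w 1)) +
      (1 - w 1) * (Real.log (1 - w 0) - Real.log (1 - w 1))) := by
    filter_upwards [box_open.mem_nhds hw] with v hv
    have h0 : v 0 ≠ 0 := (hv 0).1.ne'
    have h1 : v 1 ≠ 0 := (hv 1).1.ne'
    have h2 : 1 - v 0 ≠ 0 := (sub_pos.2 (hv 0).2).ne'
    have h3 : 1 - v 1 ≠ 0 := (sub_pos.2 (hv 1).2).ne'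
    unfold psiFun
    rw [Real.log_div h1 h0, Real.log_div h3 h2]
    ring
  refine HasFDerivAt.congr_of_eventuallyEq ?_ e
  refine HasFDerivAt.congr_fderiv H ?_
  congr 1
  · unfold psiX
    ring
  · unfold psiY
    field_simp
    ring

lemma psiX_hasF (w : Fin 2 → ℝ) (hw : w ∈ box 2) :
    HasFDerivAt psiX (cov (-(w 1 * (w 0)⁻¹ ^ 2) - (1 - w 1) * (1 - w 0)⁻¹ ^ 2)
      ((w 0)⁻¹ + (1 - w 0)⁻¹)) w := by
  have h0 : w 0 ≠ 0 := (hw 0).1.ne'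
  have h2 : 1 - w 0 ≠ 0 := (sub_pos.2 (hw 0).2).ne'
  have H := cov_sub (cov_mul (hasF1 w) (hasF_comp0 w (dinv h0)))
    (cov_mul (hasF1m w) (hasF_comp0 w (dinv1 h2)))
  unfold psiX
  refine HasFDerivAt.congr_fderiv H ?_
  congr 1 <;> ring

lemma psiY_hasF (w : Fin 2 → ℝ) (hw : w ∈ box 2) :
    HasFDerivAt psiY (cov ((w 0)⁻¹ + (1 - w 0)⁻¹) (-(w 1)⁻¹ - (1 - w 1)⁻¹)) w := by
  have h0 : w 0 ≠ 0 := (hw 0).1.ne'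
  have h1 : w 1 ≠ 0 := (hw 1).1.ne'
  have h2 : 1 - w 0 ≠ 0 := (sub_pos.2 (hw 0).2).ne'
  have h3 : 1 - w 1 ≠ 0 := (sub_pos.2 (hw 1).2).ne'
  have H := cov_sub
    (cov_sub (hasF_comp0 w (Real.hasDerivAt_log h0)) (hasF_comp1 w (Real.hasDerivAt_log h1)))
    (cov_sub (hasF_comp0 w (dlog1 h2)) (hasF_comp1 w (dlog1 h3)))
  unfold psiY
  refine HasFDerivAt.congr_fderiv H ?_
  congr 1 <;> ring

lemma phi_hasF (w : Fin 2 → ℝ) (hw : w ∈ box 2) :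
    HasFDerivAt (fun z => (1 - z 1) * psiFun z)
      (cov ((1 - w 1) * psiX w) ((1 - w 1) * psiY w - psiFun w)) w := by
  have H := cov_mul (hasF1m w) (psi_hasF w hw)
  refine HasFDerivAt.congr_fderiv H ?_
  congr 1 <;> ring

lemma phi_pd2 (z : Fin 2 → ℝ) (hz : z ∈ box 2) :
    let Ψ : (Fin 2 → ℝ) → ℝ := fun z => (1 - z 1) * psiFun z
    pd2 Ψ 0 0 z = (1 - z 1) * pd2 psiFun 0 0 z ∧
    pd2 Ψ 0 1 z = (1 - z 1) * pd2 psiFun 0 1 z - psiX z ∧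
    pd2 Ψ 1 0 z = (1 - z 1) * pd2 psiFun 1 0 z - psiX z ∧
    pd2 Ψ 1 1 z = (1 - z 1) * pd2 psiFun 1 1 z - 2 * psiY z := by
  intro Ψ
  obtain ⟨p, q, r, s⟩ := pd2_of psi_hasF hz (psiX_hasF z hz) (psiY_hasF z hz)
  obtain ⟨p', q', r', s'⟩ := pd2_of phi_hasF hz (cov_mul (hasF1m z) (psiX_hasF z hz))
    (cov_sub (cov_mul (hasF1m z) (psiY_hasF z hz)) (psi_hasF z hz))
  refine ⟨?_, ?_, ?_, ?_⟩
  · rw [p, p']; ring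
  · rw [q, q']; ring
  · rw [r, r']; ring
  · rw [s, s']; ring

lemma log_est {x y : ℝ} (hx : 0 < x) (hy : 0 < y) :
    0 ≤ Real.log x - Real.log y - (x - y) * x⁻¹ ∧
    Real.log x - Real.log y - (x - y) * x⁻¹ ≤ (x - y) ^ 2 * (x⁻¹ * y⁻¹) := by
  have h1 := Real.log_le_sub_one_of_pos (div_pos hx hy)
  have h2 := Real.log_le_sub_one_of_pos (div_pos hy hx)
  rw [Real.log_div hx.ne' hy.ne'] at h1
  rw [Real.log_div hy.ne' hx.ne'] at h2
  have e1 : (x - y) * x⁻¹ = 1 - y / x := by field_simp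
  have e2 : (x - y) ^ 2 * (x⁻¹ * y⁻¹) = x / y - 1 - (1 - y / x) := by
    field_simp
    try ring
  rw [e2, e1]
  constructor <;> linarith

/-- Bounds for the derivatives of `ψ`. -/
lemma psi_bounds (z : Fin 2 → ℝ) (h0 : z 0 ∈ Set.Icc (1/5 : ℝ) (3/10))
    (h1 : z 1 ∈ Set.Icc (1/5 : ℝ) (3/10)) :
    (|pd2 psiFun 0 0 z| ≤ 20 ∧ |pd2 psiFun 0 1 z| ≤ 20 ∧ |pd2 psiFun 1 0 z| ≤ 20 ∧
      |pd2 psiFun 1 1 z| ≤ 20) ∧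
    |pd2 psiFun 0 0 z + pd2 psiFun 1 0 z| ≤ 50 * |z 0 - z 1| ∧
    |pd2 psiFun 0 1 z + pd2 psiFun 1 1 z| ≤ 50 * |z 0 - z 1| ∧
    |pd2 psiFun 0 0 z + pd2 psiFun 0 1 z + (pd2 psiFun 1 0 z + pd2 psiFun 1 1 z)|
      ≤ 200 * |z 0 - z 1| ^ 2 ∧
    |psiX z| ≤ 10 * |z 0 - z 1| ∧
    |psiX z + psiY z| ≤ 100 * |z 0 - z 1| ^ 2 := by
  have hz : z ∈ box 2 := by
    intro i
    fin_cases i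
    · exact ⟨by simp only [Fin.zero_eta]; linarith [h0.1], by simp only [Fin.zero_eta]; linarith [h0.2]⟩
    · exact ⟨by simp only [Fin.mk_one]; linarith [h1.1], by simp only [Fin.mk_one]; linarith [h1.2]⟩
  obtain ⟨p, q, r, s⟩ := pd2_of psi_hasF hz (psiX_hasF z hz) (psiY_hasF z hz)
  rw [p, q, r, s]
  unfold psiX psiY
  clear p q r s hz
  generalize z 0 = x at *
  generalize z 1 = y at *
  obtain ⟨hx1, hx2⟩ := h0
  obtain ⟨hy1, hy2⟩ := h1
  have hx : 0 < x := by linarith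
  have hy : 0 < y := by linarith
  have hx' : 0 < 1 - x := by linarith
  have hy' : 0 < 1 - y := by linarith
  obtain ⟨l1, l2⟩ := log_est hx hy
  obtain ⟨m1, m2⟩ := log_est hx' hy'
  have ea : x * x⁻¹ = 1 := mul_inv_cancel₀ hx.ne'
  have eb : y * y⁻¹ = 1 := mul_inv_cancel₀ hy.ne'
  have ec : (1 - x) * (1 - x)⁻¹ = 1 := mul_inv_cancel₀ hx'.ne'
  have ed : (1 - y) * (1 - y)⁻¹ = 1 := mul_inv_cancel₀ hy'.ne'
  have a0 : 0 < x⁻¹ := inv_pos.2 hx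
  have b0 : 0 < y⁻¹ := inv_pos.2 hy
  have c0 : 0 < (1 - x)⁻¹ := inv_pos.2 hx'
  have d0 : 0 < (1 - y)⁻¹ := inv_pos.2 hy'
  have a5 : x⁻¹ ≤ 5 := by rw [inv_le_comm₀ hx (by norm_num)]; linarith
  have b5 : y⁻¹ ≤ 5 := by rw [inv_le_comm₀ hy (by norm_num)]; linarith
  have c2 : (1 - x)⁻¹ ≤ 3 / 2 := by rw [inv_le_comm₀ hx' (by norm_num)]; linarith
  have d2 : (1 - y)⁻¹ ≤ 3 / 2 := by rw [inv_le_comm₀ hy' (by norm_num)]; linarith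
  generalize Real.log x = lx at *
  generalize Real.log y = ly at *
  generalize Real.log (1 - x) = lx' at *
  generalize Real.log (1 - y) = ly' at *
  generalize x⁻¹ = a at *
  generalize y⁻¹ = b at *
  generalize (1 - x)⁻¹ = c at *
  generalize (1 - y)⁻¹ = d at *
  have aa : a ^ 2 ≤ 25 := by nlinarith only [a0, a5]
  have cc : c ^ 2 ≤ 9 / 4 := by nlinarith only [c0, c2]
  have ab : a * b ≤ 25 := by nlinarith only [a0, a5, b0, b5]
  have cd : c * d ≤ 9 / 4 := by nlinarith only [c0, c2, d0, d2]
  have ab0 : 0 < a * b := by positivity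
  have cd0 : 0 < c * d := by positivity
  have ya : y * a ^ 2 ≤ 10 := by nlinarith only [aa, hy, hy2, sq_nonneg a]
  have yc : (1 - y) * c ^ 2 ≤ 10 := by nlinarith only [cc, hy, hy', sq_nonneg c]
  have ya0 : 0 < y * a ^ 2 := by positivity
  have yc0 : 0 < (1 - y) * c ^ 2 := by positivity
  have key : ∀ t K : ℝ, |t| ≤ K → |(x - y) * t| ≤ K * |x - y| := by
    intro t K h
    rw [abs_mul, mul_comm]
    exact mul_le_mul_of_nonneg_right h (abs_nonneg _)
  have key2 : ∀ t K : ℝ, |t| ≤ K → |(x - y) ^ 2 * t| ≤ K * |x - y| ^ 2 := by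
    intro t K h
    rw [abs_mul, mul_comm, abs_pow]
    exact mul_le_mul_of_nonneg_right h (by positivity)
  refine ⟨⟨?_, ?_, ?_, ?_⟩, ?_, ?_, ?_, ?_, ?_⟩
  · rw [abs_le]; constructor <;> linarith
  · rw [abs_le]; constructor <;> linarith
  · rw [abs_le]; constructor <;> linarith
  · rw [abs_le]; constructor <;> linarith
  · have e : -(y * a ^ 2) - (1 - y) * c ^ 2 + (a + c) = (x - y) * (a ^ 2 - c ^ 2) := by
      linear_combination (-a) * ea - c * ec
    rw [e]
    apply key
    rw [abs_le]
    constructor <;> linarith [sq_nonneg a, sq_nonneg c]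
  · have e : a + c + (-b - d) = (x - y) * (c * d - a * b) := by
      linear_combination b * ea - a * eb + d * ec - c * ed
    rw [e]
    apply key
    rw [abs_le]
    constructor <;> linarith
  · have e : -(y * a ^ 2) - (1 - y) * c ^ 2 + (a + c) + (a + c + (-b - d)) =
        (x - y) ^ 2 * (-(a ^ 2 * b) - c ^ 2 * d) := by
      have e1 : -(y * a ^ 2) + 2 * a - b = (x - y) ^ 2 * (-(a ^ 2 * b)) := by
        linear_combination (a * x * b + b - 2 * a * y * b) * ea + (a ^ 2 * y - 2 * a) * eb
      have e2 : -((1 - y) * c ^ 2) + 2 * c - d = (x - y) ^ 2 * (-(c ^ 2 * d)) := by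
        linear_combination (c * (1 - x) * d + d - 2 * c * (1 - y) * d) * ec +
          (c ^ 2 * (1 - y) - 2 * c) * ed
      linear_combination e1 + e2
    rw [e]
    apply key2
    have t1 : a ^ 2 * b ≤ 25 * 5 := mul_le_mul aa b5 b0.le (by norm_num)
    have t2 : c ^ 2 * d ≤ 9 / 4 * (3 / 2) := mul_le_mul cc d2 d0.le (by norm_num)
    have t3 : 0 < a ^ 2 * b := by positivity
    have t4 : 0 < c ^ 2 * d := by positivity
    rw [abs_le]
    constructor <;> linarith
  · have e : y * a - (1 - y) * c = (x - y) * (-a - c) := by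
      linear_combination ea - ec
    rw [e]
    apply key
    rw [abs_le]
    constructor <;> linarith
  · have e : y * a - (1 - y) * c + (lx - ly - (lx' - ly')) =
        (lx - ly - (x - y) * a) - (lx' - ly' - (1 - x - (1 - y)) * c) := by
      linear_combination ea - ec
    rw [e]
    have s0 := sq_nonneg (x - y)
    have n1 : (x - y) ^ 2 * (a * b) ≤ (x - y) ^ 2 * 25 := mul_le_mul_of_nonneg_left ab s0
    have n2 : (x - y) ^ 2 * (c * d) ≤ (x - y) ^ 2 * (9 / 4) := mul_le_mul_of_nonneg_left cd s0
    have n3 : (1 - x - (1 - y)) ^ 2 * (c * d) = (x - y) ^ 2 * (c * d) := by ring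
    rw [sq_abs, abs_le]
    constructor <;> linarith

lemma abs_mul_le {t u K : ℝ} (h0 : 0 ≤ t) (h1 : t ≤ 1) (h : |u| ≤ K) : |t * u| ≤ K := by
  rw [abs_mul, abs_of_nonneg h0]
  exact (mul_le_of_le_one_left (abs_nonneg u) h1).trans h

/-- Bounds for the derivatives of `(1 - y₂) ψ`. -/
lemma phi_bounds (z : Fin 2 → ℝ) (h0 : z 0 ∈ Set.Icc (1/5 : ℝ) (3/10))
    (h1 : z 1 ∈ Set.Icc (1/5 : ℝ) (3/10)) :
    let Ψ : (Fin 2 → ℝ) → ℝ := fun z => (1 - z 1) * psiFun z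
    (|pd2 Ψ 0 0 z| ≤ 100 ∧ |pd2 Ψ 0 1 z| ≤ 100 ∧ |pd2 Ψ 1 0 z| ≤ 100 ∧ |pd2 Ψ 1 1 z| ≤ 100) ∧
    |pd2 Ψ 0 0 z + pd2 Ψ 1 0 z| ≤ 1000 * |z 0 - z 1| ∧
    |pd2 Ψ 0 1 z + pd2 Ψ 1 1 z| ≤ 1000 * |z 0 - z 1| ∧
    |pd2 Ψ 0 0 z + pd2 Ψ 0 1 z + (pd2 Ψ 1 0 z + pd2 Ψ 1 1 z)| ≤ 1000 * |z 0 - z 1| ^ 2 := by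
  intro Ψ
  have hz : z ∈ box 2 := by
    intro i
    fin_cases i
    · exact ⟨by simp only [Fin.zero_eta]; linarith [h0.1], by simp only [Fin.zero_eta]; linarith [h0.2]⟩
    · exact ⟨by simp only [Fin.mk_one]; linarith [h1.1], by simp only [Fin.mk_one]; linarith [h1.2]⟩
  obtain ⟨⟨b1, b2, b3, b4⟩, b5, b6, b7, b8, b9⟩ := psi_bounds z h0 h1
  obtain ⟨p, q, r, s⟩ := phi_pd2 z hz
  have hp : pd2 Ψ 0 0 z = _ := p
  have hq : pd2 Ψ 0 1 z = _ := q
  have hr : pd2 Ψ 1 0 z = _ := r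
  have hs : pd2 Ψ 1 1 z = _ := s
  rw [hp, hq, hr, hs]
  have t0 : 0 ≤ 1 - z 1 := by linarith [h1.2]
  have t1 : 1 - z 1 ≤ 1 := by linarith [h1.1]
  have b1' := abs_mul_le t0 t1 b1
  have b2' := abs_mul_le t0 t1 b2
  have b3' := abs_mul_le t0 t1 b3
  have b4' := abs_mul_le t0 t1 b4
  have b5' := abs_mul_le t0 t1 b5
  have b6' := abs_mul_le t0 t1 b6
  have b7' := abs_mul_le t0 t1 b7
  have hd : |z 0 - z 1| ≤ 1 / 10 := by
    rw [abs_le]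
    constructor <;> linarith [h0.1, h0.2, h1.1, h1.2]
  have hd0 := abs_nonneg (z 0 - z 1)
  have hd2 : |z 0 - z 1| ^ 2 ≤ 1 / 10 * |z 0 - z 1| := by nlinarith
  simp only [mul_add] at b5' b6' b7'
  rw [abs_le] at b1' b2' b3' b4' b5' b6' b7' b8 b9
  refine ⟨⟨?_, ?_, ?_, ?_⟩, ?_, ?_, ?_⟩ <;> rw [abs_le] <;> constructor <;> linarith

lemma tame_of {Ψ : (Fin 2 → ℝ) → ℝ} (hdiag : ∀ y : ℝ, y ∈ Set.Ioo (0 : ℝ) 1 → Ψ (fun _ => y) = 0)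
    (hb : ∀ z : Fin 2 → ℝ, z 0 ∈ Set.Icc (1/5 : ℝ) (3/10) → z 1 ∈ Set.Icc (1/5 : ℝ) (3/10) →
    (|pd2 Ψ 0 0 z| ≤ 100 ∧ |pd2 Ψ 0 1 z| ≤ 100 ∧ |pd2 Ψ 1 0 z| ≤ 100 ∧ |pd2 Ψ 1 1 z| ≤ 100) ∧
    |pd2 Ψ 0 0 z + pd2 Ψ 1 0 z| ≤ 1000 * |z 0 - z 1| ∧
    |pd2 Ψ 0 1 z + pd2 Ψ 1 1 z| ≤ 1000 * |z 0 - z 1| ∧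
    |pd2 Ψ 0 0 z + pd2 Ψ 0 1 z + (pd2 Ψ 1 0 z + pd2 Ψ 1 1 z)| ≤ 1000 * |z 0 - z 1| ^ 2)
    (k : ℕ) (hk : 5 ≤ k) :
    IsTame (1000 * (k : ℝ) ^ (3 : ℝ) * ((2 : ℝ) ^ k)⁻¹) Ψ (Yset k) := by
  have e3 : (k : ℝ) ^ (3 : ℝ) = (k : ℝ) ^ 3 := by
    exact_mod_cast Real.rpow_natCast (k : ℝ) 3
  rw [e3, mul_assoc]
  have hk' : (5 : ℝ) ≤ k := by exact_mod_cast hk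
  have hk2 : 1 / (k : ℝ) ^ 2 ≤ 1 / 20 :=
    one_div_le_one_div_of_le (by norm_num) (by nlinarith)
  have hY : ∀ z ∈ Yset k, z 0 ∈ Set.Icc (1/5 : ℝ) (3/10) ∧ z 1 ∈ Set.Icc (1/5 : ℝ) (3/10) ∧
      |z 0 - z 1| ≤ (k : ℝ) ^ 3 * ((2 : ℝ) ^ k)⁻¹ := by
    rintro z ⟨-, h1, h2, h3⟩
    have h2 := abs_le.1 (h2.trans hk2)
    have h3 := abs_le.1 (h3.trans hk2)
    exact ⟨⟨by linarith [h2.1], by linarith [h2.2]⟩, ⟨by linarith [h3.1], by linarith [h3.2]⟩, h1⟩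
  generalize (k : ℝ) ^ 3 * ((2 : ℝ) ^ k)⁻¹ = δ at *
  refine ⟨hdiag, ?_, ?_, ?_⟩
  · intro z hz j
    obtain ⟨h0, h1, hd⟩ := hY z hz
    obtain ⟨-, b1, b2, -⟩ := hb z h0 h1
    rw [Fin.sum_univ_two]
    fin_cases j
    · exact b1.trans (by linarith)
    · exact b2.trans (by linarith)
  · intro z hz
    obtain ⟨h0, h1, hd⟩ := hY z hz
    obtain ⟨-, -, -, b⟩ := hb z h0 h1
    simp only [Fin.sum_univ_two]
    refine b.trans ?_
    have := pow_le_pow_left₀ (abs_nonneg (z 0 - z 1)) hd 2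
    nlinarith [sq_nonneg δ]
  · intro z hz i j
    obtain ⟨h0, h1, hd⟩ := hY z hz
    obtain ⟨⟨b1, b2, b3, b4⟩, -⟩ := hb z h0 h1
    fin_cases i <;> fin_cases j
    · exact b1
    · exact b2
    · exact b3
    · exact b4

lemma psi_diag (y : ℝ) (hy : y ∈ Set.Ioo (0 : ℝ) 1) : psiFun (fun _ => y) = 0 := by
  have h1 : y ≠ 0 := hy.1.ne'
  have h2 : 1 - y ≠ 0 := (sub_pos.2 hy.2).ne'
  simp [psiFun, div_self h1, div_self h2]

/-- For all large `k`, both `ψ` and `(y₁,y₂) ↦ (1 - y₂) ψ(y₁,y₂)` are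
`(C k^c 2^{-k})`-tame on `Y`. -/
theorem statement16 :
    ∃ (k0 : ℕ) (C c : ℝ), 0 < C ∧ 0 < c ∧
      ∀ k : ℕ, k0 ≤ k →
        IsTame (C * (k : ℝ) ^ c * ((2 : ℝ) ^ k)⁻¹) psiFun (Yset k) ∧
        IsTame (C * (k : ℝ) ^ c * ((2 : ℝ) ^ k)⁻¹)
          (fun z => (1 - z 1) * psiFun z) (Yset k) := by
  refine ⟨5, 1000, 3, by norm_num, by norm_num, fun k hk => ⟨?_, ?_⟩⟩
  · refine tame_of psi_diag ?_ k hk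
    intro z h0 h1
    obtain ⟨⟨b1, b2, b3, b4⟩, b5, b6, b7, -, -⟩ := psi_bounds z h0 h1
    have hd0 := abs_nonneg (z 0 - z 1)
    have hd2 := sq_nonneg |z 0 - z 1|
    exact ⟨⟨by linarith, by linarith, by linarith, by linarith⟩, by linarith, by linarith,
      by linarith⟩
  · refine tame_of ?_ phi_bounds k hk
    intro y hy
    simp [psi_diag y hy]
end
end
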